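/- arXiv:2412.21125 — 14 statements merged into one kernel-verified Lean document; each statement's English description precedes it below -/
import Mathlib

section
/- Let X be a nonempty closed subset of ℝⁿ and let H be a hypothesis on X. Then: (i) every majorising e-class for H contains every maximal e-variable; (ii) an optimal e-class for H exists if and only if there exists a majorising e-class all of whose elements are maximal e-variables; and (iii) if an optimal e-class exists, it is unique and equals the set of all maximal e-variables. -/
open MeasureTheory Set ENNReal

noncomputable section

/-- The (topological) support of a Borel measure: the set of points all of whose open
neighbourhoods have positive measure. -/
def msupport {α : Type*} [TopologicalSpace α] [MeasurableSpace α]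
    (P : Measure α) : Set α :=
  {x | ∀ U : Set α, IsOpen U → x ∈ U → 0 < P U}

variable {α : Type*} [TopologicalSpace α] [MeasurableSpace α] {X : Set α} {m : ℕ}

/-- A hypothesis on `X`: a nonempty set of Borel probability measures (on `X`,
identified with the Borel probability measures supported in `X`). -/
def IsHypothesis (H : Set (Measure X)) : Prop :=
  H.Nonempty ∧ ∀ P ∈ H, IsProbabilityMeasure P

/-- An e-variable with respect to `H`: a Borel measurable nonnegative function whose
expectation is at most one under every `P ∈ H`. -/
def IsEVar (H : Set (Measure X)) (E : X → ℝ) : Prop :=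
  Measurable E ∧ (∀ x, 0 ≤ E x) ∧ ∀ P ∈ H, ∫⁻ x, ENNReal.ofReal (E x) ∂P ≤ 1

/-- `f` majorises `g` if `f(x) ≥ g(x)` for every `x ∈ X`. -/
def Majorises (f g : X → ℝ) : Prop := ∀ x, g x ≤ f x

/-- A maximal e-variable: an e-variable with no strict majoriser among e-variables. -/
def IsMaximalEVar (H : Set (Measure X)) (E : X → ℝ) : Prop :=
  IsEVar H E ∧ ¬ ∃ E', IsEVar H E' ∧ Majorises E' E ∧ E' ≠ E

/-- A majorising e-class: an e-class such that every e-variable is majorised by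
one of its elements. -/
def IsMajorisingClass (H : Set (Measure X)) (C : Set (X → ℝ)) : Prop :=
  (∀ E ∈ C, IsEVar H E) ∧ ∀ E, IsEVar H E → ∃ E' ∈ C, Majorises E' E

/-- The optimal e-class: a majorising e-class contained in every majorising e-class. -/
def IsOptimalClass (H : Set (Measure X)) (C : Set (X → ℝ)) : Prop :=
  IsMajorisingClass H C ∧ ∀ C', IsMajorisingClass H C' → C ⊆ C'

/-- `P ∈ P_Φ`: the expectation of the ℓ¹-norm of `Φ` under `P` is finite. -/
def MemPPhi (P : Measure X) (Φ : X → Fin m → ℝ) : Prop :=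
  ∫⁻ x, ENNReal.ofReal (∑ i, |Φ x i|) ∂P < ⊤

/-- `Φ` is a constraint for `H`: `Φ` is continuous and `H` is exactly the set of Borel
probability measures `P ∈ P_Φ` with `⟨P, Φ⟩ = 0`. -/
def IsConstraint (H : Set (Measure X)) (Φ : X → Fin m → ℝ) : Prop :=
  Continuous Φ ∧
    H = {P : Measure X | IsProbabilityMeasure P ∧ MemPPhi P Φ ∧ ∫ x, Φ x ∂P = 0}

/-- A proper constraint: a constraint such that `0` lies in the relative interior
of the convex hull of the image of `Φ`. -/
def IsProperConstraint (H : Set (Measure X)) (Φ : X → Fin m → ℝ) : Prop :=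
  IsConstraint H Φ ∧
    (0 : Fin m → ℝ) ∈ intrinsicInterior ℝ (convexHull ℝ (Set.range Φ))

/-- A minimal constraint: a constraint such that `0` lies in the interior
of the convex hull of the image of `Φ`. -/
def IsMinimalConstraint (H : Set (Measure X)) (Φ : X → Fin m → ℝ) : Prop :=
  IsConstraint H Φ ∧
    (0 : Fin m → ℝ) ∈ interior (convexHull ℝ (Set.range Φ))

/-- A finitely constrained hypothesis: one admitting a constraint. -/
def FinitelyConstrained (H : Set (Measure X)) : Prop :=
  ∃ (m : ℕ) (Φ : X → Fin m → ℝ), IsConstraint H Φ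

/-- A properly constrained hypothesis: one admitting a proper constraint. -/
def ProperlyConstrained (H : Set (Measure X)) : Prop :=
  ∃ (m : ℕ) (Φ : X → Fin m → ℝ), IsProperConstraint H Φ

/-- `Λ_{Φ|S} = {λ ∈ ℝᵐ : sup_{x ∈ S} λ·Φ(x) ≤ 1}`. -/
def LambdaSet (Φ : X → Fin m → ℝ) (S : Set X) : Set (Fin m → ℝ) :=
  {l | ∀ x ∈ S, ∑ i, l i * Φ x i ≤ 1}

/-- The dual e-class `E_H^∨ = {1 - λ·Φ : λ ∈ Λ_Φ}`. -/
def dualClass (Φ : X → Fin m → ℝ) : Set (X → ℝ) :=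
  {E | ∃ l ∈ LambdaSet Φ Set.univ, E = fun x => 1 - ∑ i, l i * Φ x i}

/-- A matching set for `H`: a closed set that is exactly the support of some `P ∈ H`. -/
def IsMatchingSet (H : Set (Measure X)) (S : Set X) : Prop :=
  IsClosed S ∧ ∃ P ∈ H, msupport P = S

end

/-- (i) every majorising e-class contains every maximal e-variable;
(ii) an optimal e-class exists iff there is a majorising e-class whose elements are all
maximal; (iii) any optimal e-class equals the set of all maximal e-variables
(and is hence unique). -/
theorem statement0 {n : ℕ} {X : Set (EuclideanSpace ℝ (Fin n))}
    (hXc : IsClosed X) (hXne : X.Nonempty)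
    (H : Set (Measure X)) (hH : IsHypothesis H) :
    (∀ C : Set (X → ℝ), IsMajorisingClass H C →
        ∀ E : X → ℝ, IsMaximalEVar H E → E ∈ C) ∧
    ((∃ C, IsOptimalClass H C) ↔
        ∃ C, IsMajorisingClass H C ∧ ∀ E ∈ C, IsMaximalEVar H E) ∧
    (∀ C, IsOptimalClass H C → C = {E | IsMaximalEVar H E}) := by
  have h1 : ∀ C : Set (X → ℝ), IsMajorisingClass H C →
      ∀ E : X → ℝ, IsMaximalEVar H E → E ∈ C := by
    intro C hC E hE
    obtain ⟨E', hE', hm⟩ := hC.2 E hE.1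
    by_cases h : E' = E
    · exact h ▸ hE'
    · exact absurd ⟨E', hC.1 E' hE', hm, h⟩ hE.2
  have h2 : ∀ C : Set (X → ℝ), IsOptimalClass H C → ∀ E ∈ C, IsMaximalEVar H E := by
    intro C hC E hE
    refine ⟨hC.1.1 E hE, ?_⟩
    rintro ⟨E', hE', hm, hne⟩
    have hmaj : IsMajorisingClass H (C \ {E}) := by
      refine ⟨fun F hF => hC.1.1 F hF.1, fun F hF => ?_⟩
      obtain ⟨G, hG, hGF⟩ := hC.1.2 F hF
      by_cases h : G = E
      · subst h
        obtain ⟨K, hK, hKE⟩ := hC.1.2 E' hE'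
        refine ⟨K, ⟨hK, ?_⟩, fun x => (hGF x).trans ((hm x).trans (hKE x))⟩
        intro hKG
        have hKG : K = G := hKG
        subst hKG
        exact hne (funext fun x => le_antisymm (hKE x) (hm x))
      · exact ⟨G, ⟨hG, h⟩, hGF⟩
    exact (hC.2 _ hmaj hE).2 rfl
  refine ⟨h1, ⟨?_, ?_⟩, ?_⟩
  · rintro ⟨C, hC⟩
    exact ⟨C, hC.1, h2 C hC⟩
  · rintro ⟨C, hC, hmax⟩
    exact ⟨C, hC, fun C' hC' E hE => h1 C' hC' E (hmax E hE)⟩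
  · intro C hC
    exact Set.Subset.antisymm (h2 C hC) (fun E hE => h1 C hC.1 E hE)
end

section
/- Let X be a nonempty closed subset of ℝⁿ and H a hypothesis on X. If there exists a point x₀ ∈ X such that sup_{P ∈ H} P({x₀}) = 0, then no optimal e-class for H exists. -/
open MeasureTheory Set ENNReal

/-- if some `x₀ ∈ X` has `sup_{P ∈ H} P({x₀}) = 0`, then no optimal
e-class for `H` exists. -/
theorem statement1 {n : ℕ} {X : Set (EuclideanSpace ℝ (Fin n))}
    (hXc : IsClosed X) (hXne : X.Nonempty)
    (H : Set (Measure X)) (hH : IsHypothesis H)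
    (hx : ∃ x₀ : X, (⨆ P ∈ H, P {x₀}) = 0) :
    ¬ ∃ C, IsOptimalClass H C := by
  classical
  obtain ⟨x₀, hx₀⟩ := hx
  rintro ⟨C, hC, hmin⟩
  have hz : IsEVar H (fun _ => (0 : ℝ)) :=
    ⟨measurable_const, fun _ => le_rfl, fun P _ => by simp⟩
  obtain ⟨E, hE, -⟩ := hC.2 _ hz
  obtain ⟨hEm, hE0, hE1⟩ := hC.1 E hE
  have hnull : ∀ P ∈ H, P {x₀} = 0 := by
    intro P hP
    have h : P {x₀} ≤ ⨆ P ∈ H, P {x₀} := le_iSup₂ (f := fun (P : Measure X) (_ : P ∈ H) => P {x₀}) P hP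
    rw [hx₀] at h
    exact le_antisymm h (zero_le)
  have hB : IsEVar H (fun x => E x + ({x₀} : Set X).indicator (fun _ => (1 : ℝ)) x) := by
    refine ⟨hEm.add (measurable_const.indicator (measurableSet_singleton x₀)), ?_, ?_⟩
    · intro x
      exact add_nonneg (hE0 x) (Set.indicator_nonneg (fun _ _ => zero_le_one) x)
    · intro P hP
      refine le_trans (le_of_eq (lintegral_congr_ae ?_)) (hE1 P hP)
      have : ∀ᵐ x ∂P, x ∉ ({x₀} : Set X) := measure_eq_zero_iff_ae_notMem.mp (hnull P hP)
      filter_upwards [this] with x hx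
      simp [Set.indicator_of_notMem hx]
  have hmem := hmin {F | IsEVar H F ∧ F ≠ E} ⟨fun F hF => hF.1, fun F hF => by
    by_cases h : F = E
    · refine ⟨_, ⟨hB, ?_⟩, ?_⟩
      · intro h'
        have := congrFun h' x₀
        simp at this
      · intro x
        rw [h]
        exact le_add_of_nonneg_right (Set.indicator_nonneg (fun _ _ => zero_le_one) x)
    · exact ⟨F, ⟨hF, h⟩, fun _ => le_rfl⟩⟩ hE
  exact hmem.2 rfl
end

section
/- Let X be a nonempty finite subset of ℝⁿ and H a hypothesis on X such that sup_{P ∈ H} P({x}) > 0 for every x ∈ X. Then an optimal e-class for H exists. -/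
open MeasureTheory Set ENNReal

/-- if `X` is nonempty and finite and `sup_{P ∈ H} P({x}) > 0` for every
`x ∈ X`, then an optimal e-class for `H` exists. -/
theorem statement2 {n : ℕ} {X : Set (EuclideanSpace ℝ (Fin n))}
    (hXf : X.Finite) (hXne : X.Nonempty)
    (H : Set (Measure X)) (hH : IsHypothesis H)
    (hpos : ∀ x : X, 0 < ⨆ P ∈ H, P {x}) :
    ∃ C, IsOptimalClass H C := by
  haveI : Finite X := hXf
  haveI := Fintype.ofFinite X
  -- every e-variable is pointwise bounded
  have hb : ∀ x : X, ∃ b : ℝ, ∀ E, IsEVar H E → E x ≤ b := by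
    intro x
    obtain ⟨P, hP⟩ := lt_iSup_iff.1 (hpos x)
    obtain ⟨hPH, hPx⟩ := lt_iSup_iff.1 hP
    haveI := hH.2 P hPH
    refine ⟨((P {x})⁻¹).toReal, fun E hE => ?_⟩
    have h1 := hE.2.2 P hPH
    rw [lintegral_fintype] at h1
    have h2 : ENNReal.ofReal (E x) * P {x} ≤ 1 :=
      (Finset.single_le_sum (f := fun y => ENNReal.ofReal (E y) * P {y})
        (fun _ _ => zero_le) (Finset.mem_univ x)).trans h1
    have h3 : ENNReal.ofReal (E x) ≤ (P {x})⁻¹ := ENNReal.le_inv_iff_mul_le.2 h2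
    exact (ENNReal.ofReal_le_iff_le_toReal (ENNReal.inv_ne_top.2 hPx.ne')).1 h3
  choose B hB using hb
  have hclosed : IsClosed {E : X → ℝ | IsEVar H E} := by
    have : {E : X → ℝ | IsEVar H E} = {E | ∀ x, 0 ≤ E x} ∩
        {E | ∀ P ∈ H, ∑ x, ENNReal.ofReal (E x) * P {x} ≤ 1} := by
      ext E
      simp only [IsEVar, lintegral_fintype, Set.mem_setOf_eq, Set.mem_inter_iff]
      exact ⟨fun h => h.2, fun h => ⟨measurable_of_finite E, h⟩⟩
    rw [this]
    refine IsClosed.inter ?_ ?_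
    · simp only [Set.setOf_forall]
      exact isClosed_iInter fun x => isClosed_le continuous_const (continuous_apply x)
    · simp only [Set.setOf_forall]
      refine isClosed_iInter fun P => isClosed_iInter fun hP => ?_
      haveI := hH.2 P hP
      refine isClosed_le (continuous_finsetSum _ fun x _ => ?_) continuous_const
      exact (ENNReal.continuous_mul_const (measure_ne_top P _)).comp
        (ENNReal.continuous_ofReal.comp (continuous_apply x))
  refine ⟨{E | IsMaximalEVar H E}, ⟨fun E hE => hE.1, fun E hE => ?_⟩, ?_⟩
  · have hK : IsCompact (Set.Icc E B ∩ {E : X → ℝ | IsEVar H E}) :=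
      isCompact_Icc.inter_right hclosed
    obtain ⟨M, hM, hmax⟩ := hK.exists_isMaxOn ⟨E, ⟨le_rfl, fun x => hB x E hE⟩, hE⟩
      (f := fun F : X → ℝ => ∑ x, F x)
      (continuous_finsetSum _ fun x _ => continuous_apply x).continuousOn
    refine ⟨M, ⟨hM.2, ?_⟩, hM.1.1⟩
    rintro ⟨F, hF, hFM, hne⟩
    have h1 : ∑ x, F x ≤ ∑ x, M x :=
      hmax ⟨⟨fun x => (hM.1.1 x).trans (hFM x), fun x => hB x F hF⟩, hF⟩
    have h2 : ∑ x, M x = ∑ x, F x :=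
      le_antisymm (Finset.sum_le_sum fun x _ => hFM x) h1
    have h3 := (Finset.sum_eq_sum_iff_of_le fun x _ => hFM x).1 h2
    exact hne (funext fun x => (h3 x (Finset.mem_univ x)).symm)
  · intro C' hC' E hE
    obtain ⟨F, hF, hFE⟩ := hC'.2 E hE.1
    by_cases h : F = E
    · exact h ▸ hF
    · exact absurd ⟨F, hC'.1 F hF, hFE, h⟩ hE.2
end

section
/- Let X be a nonempty countable closed subset of ℝⁿ and H a hypothesis on X such that sup_{P ∈ H} P({x}) > 0 for every x ∈ X. Then an optimal e-class for H exists. -/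
open MeasureTheory Set ENNReal

/-- Every e-variable is majorised by a maximal one (Zorn). -/
theorem exists_maximal_evar {n : ℕ} {X : Set (EuclideanSpace ℝ (Fin n))}
    (hXcnt : X.Countable) (H : Set (Measure X))
    (hpos : ∀ x : X, 0 < ⨆ P ∈ H, P {x}) (E₀ : X → ℝ) (hE₀ : IsEVar H E₀) :
    ∃ M, E₀ ≤ M ∧ Maximal (fun E => E ∈ {E | IsEVar H E}) M := by
  have : Countable X := hXcnt.to_subtype
  refine zorn_le_nonempty₀ _ ?_ E₀ hE₀
  intro c hc hchain E₁ hE₁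
  -- pointwise bound
  have hfin : ∀ x, (⨆ E : c, ENNReal.ofReal (E.1 x)) ≠ ⊤ := by
    intro x
    have hx := hpos x
    simp only [lt_iSup_iff] at hx
    obtain ⟨P, hP, hPx⟩ := hx
    have hb : (⨆ E : c, ENNReal.ofReal (E.1 x)) ≤ 1 / P {x} := by
      refine iSup_le fun E => ?_
      have h1 := (hc E.2).2.2 P hP
      rw [lintegral_countable'] at h1
      have h2 := (ENNReal.le_tsum x).trans h1
      rw [ENNReal.le_div_iff_mul_le (Or.inl hPx.ne') (Or.inr one_ne_top)]
      exact h2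
    refine ne_top_of_le_ne_top ?_ hb
    exact (ENNReal.div_lt_top one_ne_top hPx.ne').ne
  refine ⟨fun x => (⨆ E : c, ENNReal.ofReal (E.1 x)).toReal, ⟨measurable_of_countable _,
    fun x => ENNReal.toReal_nonneg, ?_⟩, ?_⟩
  · intro P hP
    rw [lintegral_countable', ENNReal.tsum_eq_iSup_sum]
    refine iSup_le fun s => ?_
    have : ∀ x, ENNReal.ofReal ((⨆ E : c, ENNReal.ofReal (E.1 x)).toReal) * P {x}
        = ⨆ E : c, ENNReal.ofReal (E.1 x) * P {x} := by
      intro x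
      rw [ENNReal.ofReal_toReal (hfin x), ENNReal.iSup_mul]
    simp only [this]
    rw [ENNReal.finsetSum_iSup]
    · refine iSup_le fun E => ?_
      have h1 := (hc E.2).2.2 P hP
      rw [lintegral_countable'] at h1
      exact (ENNReal.sum_le_tsum s).trans h1
    · intro E F
      rcases hchain.total E.2 F.2 with h | h
      · exact ⟨F, fun x => ⟨by gcongr; exact h x, le_rfl⟩⟩
      · exact ⟨E, fun x => ⟨le_rfl, by gcongr; exact h x⟩⟩
  · intro E hE x
    have h := le_iSup (fun E : c => ENNReal.ofReal (E.1 x)) ⟨E, hE⟩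
    exact (ENNReal.ofReal_le_iff_le_toReal (hfin x)).1 h

/-- if `X` is nonempty, countable and closed and `sup_{P ∈ H} P({x}) > 0`
for every `x ∈ X`, then an optimal e-class for `H` exists. -/
theorem statement3 {n : ℕ} {X : Set (EuclideanSpace ℝ (Fin n))}
    (hXc : IsClosed X) (hXcnt : X.Countable) (hXne : X.Nonempty)
    (H : Set (Measure X)) (hH : IsHypothesis H)
    (hpos : ∀ x : X, 0 < ⨆ P ∈ H, P {x}) :
    ∃ C, IsOptimalClass H C := by
  refine ⟨{M | Maximal (fun E => E ∈ {E | IsEVar H E}) M}, ⟨fun M hM => hM.1, fun E hE => ?_⟩,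
    fun C' hC' M hM => ?_⟩
  · obtain ⟨M, h1, h2⟩ := exists_maximal_evar hXcnt H hpos E hE
    exact ⟨M, h2, h1⟩
  · obtain ⟨E, hE, hEM⟩ := hC'.2 M hM.1
    have h : E ≤ M := hM.2 (hC'.1 E hE) hEM
    have : M = E := le_antisymm hEM h
    rwa [this]
end

section
/- Let X = [0,1] ⊆ ℝ and let H = {P ∈ P_[0,1] : P({0}) ≥ 1/2} ∪ {U}, where U is the uniform (Lebesgue) distribution on [0,1]. Then H does not admit an optimal e-class. -/
open MeasureTheory Set ENNReal

/-- for `X = [0,1]` and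
`H = {P : P({0}) ≥ 1/2} ∪ {uniform distribution on [0,1]}`, no optimal e-class exists. -/
theorem statement4 :
    ¬ ∃ C, IsOptimalClass
      (({P : Measure (Set.Icc (0:ℝ) 1) | IsProbabilityMeasure P ∧
            (1 : ℝ≥0∞) / 2 ≤ P {⟨0, Set.mem_Icc.mpr (by norm_num)⟩}} ∪
          {Measure.comap (Subtype.val : (Set.Icc (0:ℝ) 1) → ℝ) volume})) C := by
  rintro ⟨C, ⟨hC1, hC2⟩, hC3⟩
  set z : Set.Icc (0:ℝ) 1 := ⟨0, Set.mem_Icc.mpr (by norm_num)⟩ with hz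
  set U : Measure (Set.Icc (0:ℝ) 1) :=
    Measure.comap (Subtype.val : (Set.Icc (0:ℝ) 1) → ℝ) volume with hU
  set H := ({P : Measure (Set.Icc (0:ℝ) 1) | IsProbabilityMeasure P ∧
            (1 : ℝ≥0∞) / 2 ≤ P {z}} ∪ {U}) with hH
  have hUs : ∀ x, U {x} = 0 := by
    intro x
    rw [hU, comap_subtype_coe_apply measurableSet_Icc]
    simp
  have hUu : U univ = 1 := by
    rw [hU, comap_subtype_coe_apply measurableSet_Icc, image_univ, Subtype.range_coe,
      Real.volume_Icc]
    simp
  have updm : ∀ (F : Set.Icc (0:ℝ) 1 → ℝ) (y : Set.Icc (0:ℝ) 1), Measurable F →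
      Measurable (Function.update F y 2) := by
    intro F y hF
    have : Function.update F y 2 = fun x => if x = y then 2 else F x := by
      funext x; rw [Function.update_apply]
    rw [this]
    exact Measurable.ite (measurableSet_singleton y) measurable_const hF
  -- criterion for e-variables
  have crit : ∀ E : Set.Icc (0:ℝ) 1 → ℝ, Measurable E → (∀ x, 0 ≤ E x) → (∀ x, E x ≤ 2) →
      E z = 0 → ∫⁻ x, ENNReal.ofReal (E x) ∂U ≤ 1 → IsEVar H E := by
    intro E hm h0 h2 hE hI
    refine ⟨hm, h0, ?_⟩
    rintro P (⟨hP, hP2⟩ | hP)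
    · calc ∫⁻ x, ENNReal.ofReal (E x) ∂P
          ≤ ∫⁻ x, ({z}ᶜ : Set (Set.Icc (0:ℝ) 1)).indicator (fun _ => (2:ℝ≥0∞)) x ∂P := by
            apply lintegral_mono
            intro x
            by_cases hx : x = z
            · simp [hx, hE]
            · have : x ∈ ({z}ᶜ : Set (Set.Icc (0:ℝ) 1)) := hx
              rw [indicator_of_mem this]
              exact (ENNReal.ofReal_le_ofReal (h2 x)).trans (by simp)
        _ = 2 * P {z}ᶜ := by
            rw [lintegral_indicator_const (measurableSet_singleton z).compl]
        _ ≤ 2 * (1 / 2) := by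
            gcongr
            rw [prob_compl_eq_one_sub (measurableSet_singleton z)]
            calc 1 - P {z} ≤ 1 - 1/2 := by gcongr
              _ = 1/2 := by simp
        _ = 1 := by
            rw [one_div]; exact ENNReal.mul_inv_cancel (by simp) (by simp)
    · rw [mem_singleton_iff] at hP
      rw [hP]; exact hI
  -- modification at a point
  have modif : ∀ (E : Set.Icc (0:ℝ) 1 → ℝ) (y : Set.Icc (0:ℝ) 1),
      ∫⁻ x, ENNReal.ofReal (Function.update E y 2 x) ∂U = ∫⁻ x, ENNReal.ofReal (E x) ∂U := by
    intro E y
    apply lintegral_congr_ae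
    have : ∀ᵐ x ∂U, x ≠ y := by
      rw [ae_iff]; simpa using hUs y
    filter_upwards [this] with x hx
    simp [Function.update_of_ne hx]
  let w : Set.Icc (0:ℝ) 1 := ⟨1/2, by constructor <;> norm_num⟩
  have hwz : z ≠ w := by
    intro h
    have := congrArg Subtype.val h
    norm_num [hz, w] at this
  have hE0 : IsEVar H (Function.update (fun _ => 0) w 2) := by
    apply crit
    · exact updm _ _ measurable_const
    · intro x; by_cases h : x = w <;> simp [Function.update_apply, h]
    · intro x; by_cases h : x = w <;> simp [Function.update_apply, h]
    · simp [Function.update_of_ne hwz]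
    · rw [modif]; simp
  obtain ⟨E, hEC, hmaj⟩ := hC2 _ hE0
  obtain ⟨hm, h0, hI⟩ := hC1 E hEC
  have pair : ∀ y, E z + E y ≤ 2 := by
    intro y
    have key := hI ((2:ℝ≥0∞)⁻¹ • Measure.dirac z + (2:ℝ≥0∞)⁻¹ • Measure.dirac y) (by
      left
      refine ⟨⟨?_⟩, ?_⟩
      · simp [ENNReal.inv_two_add_inv_two]
      · simp)
    rw [lintegral_add_measure, lintegral_smul_measure, lintegral_smul_measure,
      lintegral_dirac, lintegral_dirac, smul_eq_mul, smul_eq_mul, ← mul_add,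
      ← ENNReal.ofReal_add (h0 _) (h0 _)] at key
    have k2 : ENNReal.ofReal (E z + E y) ≤ 2 := by
      calc ENNReal.ofReal (E z + E y) = 2 * (2⁻¹ * ENNReal.ofReal (E z + E y)) := by
            rw [← mul_assoc, ENNReal.mul_inv_cancel (by simp) (by simp), one_mul]
        _ ≤ 2 * 1 := by gcongr
        _ = 2 := by simp
    have : (2:ℝ≥0∞) = ENNReal.ofReal 2 := by simp
    rw [this] at k2
    exact (ENNReal.ofReal_le_ofReal_iff (by norm_num)).1 k2
  have hEw : 2 ≤ E w := by simpa using hmaj w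
  have hEz : E z = 0 := by linarith [pair w, h0 z]
  have hE2 : ∀ y, E y ≤ 2 := fun y => by linarith [pair y]
  have hIU : ∫⁻ x, ENNReal.ofReal (E x) ∂U ≤ 1 := hI U (Or.inr rfl)
  obtain ⟨y, hyz, hy⟩ : ∃ y, y ≠ z ∧ E y < 2 := by
    by_contra! hcon
    have hae : ∀ᵐ x ∂U, x ≠ z := by
      rw [ae_iff]; simpa using hUs z
    have : ∫⁻ _, (2:ℝ≥0∞) ∂U ≤ ∫⁻ x, ENNReal.ofReal (E x) ∂U := by
      apply lintegral_mono_ae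
      filter_upwards [hae] with x hx
      have := ENNReal.ofReal_le_ofReal (hcon x hx)
      simpa using this
    rw [lintegral_const, hUu, mul_one] at this
    exact absurd (this.trans hIU) (by norm_num)
  have hE' : IsEVar H (Function.update E y 2) := by
    apply crit
    · exact updm _ _ hm
    · intro x; by_cases h : x = y <;> simp [Function.update_apply, h, h0]
    · intro x; by_cases h : x = y <;> simp [Function.update_apply, h, hE2]
    · rw [Function.update_of_ne hyz.symm, hEz]
    · rw [modif]; exact hIU
  have hne : Function.update E y 2 ≠ E := by
    intro h
    have := congrFun h y
    simp at this
    linarith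
  have := hC3 {F | IsEVar H F ∧ F ≠ E} ⟨fun F hF => hF.1, by
    intro F hF
    by_cases h : F = E
    · refine ⟨_, ⟨hE', hne⟩, ?_⟩
      intro x
      rw [h]
      by_cases hx : x = y
      · simp [hx, hE2]
      · simp [hx]
    · exact ⟨F, ⟨hF, h⟩, fun x => le_rfl⟩⟩ hEC
  exact this.2 rfl
end

section
/- Let X be a nonempty closed subset of ℝⁿ and H a finitely constrained hypothesis on X. Then H is properly constrained if and only if sup_{P ∈ H} P({x}) > 0 for every x ∈ X. Moreover, if H is properly constrained, then every constraint for H is a proper constraint, and there exists a function A : X → [1,∞) such that E(x) ≤ A(x) for every e-variable E ∈ E_H and every x ∈ X. -/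
open MeasureTheory Set ENNReal

section helpers

variable {n : ℕ} {X : Set (EuclideanSpace ℝ (Fin n))} {m : ℕ}

/-- A finitely supported measure with mean zero belongs to `H`. -/
lemma finite_mem_H {H : Set (Measure X)} {Φ : X → Fin m → ℝ} (hΦ : IsConstraint H Φ)
    {ι : Type*} [Fintype ι] (v : ι → ℝ) (p : ι → X) (hv : ∀ i, 0 ≤ v i)
    (hs : ∑ i, v i = 1) (h0 : ∑ i, v i • Φ (p i) = 0) :
    (∑ i, ENNReal.ofReal (v i) • Measure.dirac (p i)) ∈ H := by
  rw [hΦ.2]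
  refine ⟨⟨?_⟩, ?_, ?_⟩
  · simp only [Measure.coe_finset_sum, Finset.sum_apply, Measure.smul_apply, measure_univ,
      smul_eq_mul, mul_one]
    rw [← ENNReal.ofReal_sum_of_nonneg (fun i _ => hv i), hs, ENNReal.ofReal_one]
  · unfold MemPPhi
    rw [lintegral_finset_sum_measure]
    refine ENNReal.sum_lt_top.2 fun i _ => ?_
    rw [lintegral_smul_measure, lintegral_dirac]
    exact ENNReal.mul_lt_top ENNReal.ofReal_lt_top ENNReal.ofReal_lt_top
  · rw [integral_finset_sum_measure]
    · rw [← h0]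
      refine Finset.sum_congr rfl fun i _ => ?_
      rw [integral_smul_measure, integral_dirac, ENNReal.toReal_ofReal (hv i)]
    · intro i _
      refine Integrable.smul_measure ?_ ENNReal.ofReal_ne_top
      exact integrable_dirac (by simp)

/-- Properness gives atoms everywhere. -/
lemma atom_of_proper {H : Set (Measure X)} {Φ : X → Fin m → ℝ} (hΦ : IsProperConstraint H Φ)
    (x : X) : ∃ P ∈ H, 0 < P {x} := by
  obtain ⟨hc, h0⟩ := hΦ
  set C := convexHull ℝ (Set.range Φ) with hC
  have hyC : Φ x ∈ C := subset_convexHull ℝ _ ⟨x, rfl⟩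
  obtain ⟨z, hz, hz0⟩ := h0
  have hzA : (0 : Fin m → ℝ) ∈ affineSpan ℝ C := hz0 ▸ z.2
  have hyA : Φ x ∈ affineSpan ℝ C := subset_affineSpan ℝ _ hyC
  let c : ℝ → affineSpan ℝ C := fun t =>
    ⟨AffineMap.lineMap 0 (Φ x) t, AffineMap.lineMap_mem t hzA hyA⟩
  have hcc : Continuous c := by
    refine Continuous.subtype_mk ?_ _
    exact AffineMap.lineMap_continuous
  have hc0 : c 0 = z := by
    apply Subtype.ext
    simp [c, hz0]
  have hnhds : c ⁻¹' (interior ((↑) ⁻¹' C)) ∈ nhds (0 : ℝ) :=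
    (isOpen_interior.preimage hcc).mem_nhds (by simpa [hc0] using hz)
  obtain ⟨r, hr, hball⟩ := Metric.mem_nhds_iff.1 hnhds
  have hmem : (-(r / 2)) ∈ Metric.ball (0 : ℝ) r := by
    rw [mem_ball_zero_iff, Real.norm_eq_abs, abs_neg, abs_of_pos (by positivity)]
    linarith
  have h1 : (-(r/2)) • Φ x ∈ C := by
    have := interior_subset (hball hmem)
    simpa [c, AffineMap.lineMap_apply] using this
  rw [hC, mem_convexHull_iff_exists_fintype] at h1
  obtain ⟨ι, _, w, q, hw, hw1, hq, hsum⟩ := h1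
  choose p hp using hq
  have hr2 : (0 : ℝ) < 1 + r / 2 := by positivity
  have key := finite_mem_H hc (ι := Option ι)
    (fun o => o.elim ((r/2) / (1 + r/2)) (fun i => w i / (1 + r / 2)))
    (fun o => o.elim x p) ?_ ?_ ?_
  · refine ⟨_, key, ?_⟩
    simp only [Fintype.sum_option, Option.elim, Measure.add_apply, Measure.smul_apply,
      smul_eq_mul]
    refine lt_of_lt_of_le ?_ le_self_add
    simp only [Measure.dirac_apply, Set.indicator_of_mem, Set.mem_singleton_iff, Pi.one_apply,
      mul_one]
    exact ENNReal.ofReal_pos.2 (by positivity)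
  · rintro (_ | i)
    · simp only [Option.elim]; positivity
    · simp only [Option.elim]; exact div_nonneg (hw i) hr2.le
  · simp only [Fintype.sum_option, Option.elim]
    rw [← Finset.sum_div, hw1]; field_simp; ring
  · simp only [Fintype.sum_option, Option.elim, hp]
    have : ∀ i, (w i / (1 + r/2)) • q i = (1 + r/2)⁻¹ • (w i • q i) := by
      intro i; rw [smul_smul]; congr 1; ring
    simp only [this]
    rw [← Finset.smul_sum, hsum, smul_smul, ← add_smul]
    convert zero_smul ℝ _ using 2
    field_simp; ring

lemma integrable_constraint {P : Measure X} {Φ : X → Fin m → ℝ} (hc : Continuous Φ)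
    (h : MemPPhi P Φ) : Integrable Φ P := by
  refine ⟨hc.aestronglyMeasurable, ?_⟩
  rw [hasFiniteIntegral_iff_norm]
  refine lt_of_le_of_lt (lintegral_mono fun x => ENNReal.ofReal_le_ofReal ?_) h
  refine (pi_norm_le_iff_of_nonneg (Finset.sum_nonneg fun i _ => abs_nonneg _)).2 fun i => ?_
  exact Finset.single_le_sum (f := fun i => |Φ x i|) (fun i _ => abs_nonneg _)
    (Finset.mem_univ i)

lemma functional_zero {H : Set (Measure X)} {Φ : X → Fin m → ℝ} (hΦ : IsConstraint H Φ)
    (hat : ∀ x : X, ∃ P ∈ H, 0 < P {x}) (g : (Fin m → ℝ) →ₗ[ℝ] ℝ)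
    (hg : ∀ x, g (Φ x) ≤ 0) (x : X) : g (Φ x) = 0 := by
  obtain ⟨P, hP, hpos⟩ := hat x
  rw [hΦ.2] at hP
  obtain ⟨_, hm, hi⟩ := hP
  have hint := integrable_constraint hΦ.1 hm
  let G := LinearMap.toContinuousLinearMap g
  have h1 : ∫ y, G (Φ y) ∂P = 0 := by
    rw [G.integral_comp_comm hint, hi, map_zero]
  have h2 : ∫ y, -G (Φ y) ∂P = 0 := by rw [integral_neg, h1, neg_zero]
  have h3 := (integral_eq_zero_iff_of_nonneg (f := fun y => -G (Φ y))
    (fun y => neg_nonneg.2 (hg y)) (G.integrable_comp hint).neg).1 h2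
  by_contra hne
  refine hpos.ne' (measure_mono_null ?_ (ae_iff.1 h3))
  rintro y rfl
  simpa [G] using hne

lemma proper_of_atom {H : Set (Measure X)} {Φ : X → Fin m → ℝ} (hXne : X.Nonempty)
    (hΦ : IsConstraint H Φ)
    (hat : ∀ x : X, ∃ P ∈ H, 0 < P {x}) : IsProperConstraint H Φ := by
  refine ⟨hΦ, ?_⟩
  obtain ⟨x0, hx0⟩ := hXne
  let V := Submodule.span ℝ (Set.range Φ)
  let Ψ : X → V := fun x => ⟨Φ x, Submodule.subset_span ⟨x, rfl⟩⟩
  have key : ∀ f : V →ₗ[ℝ] ℝ, (∀ x, f (Ψ x) ≤ 0) → f = 0 := by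
    intro f hf
    obtain ⟨g, hg⟩ := LinearMap.exists_extend f
    have hgf : ∀ v : V, g v = f v := fun v => by rw [← hg]; rfl
    have hz := functional_zero hΦ hat g (fun x => by
      have := hf x; rw [← hgf] at this; exact this)
    have hle : V ≤ LinearMap.ker g := by
      refine Submodule.span_le.2 ?_
      rintro _ ⟨x, rfl⟩
      exact hz x
    ext v
    rw [← hgf]
    exact hle v.2
  have hint : (interior (convexHull ℝ (Set.range Ψ))).Nonempty := by
    rw [interior_convexHull_nonempty_iff_affineSpan_eq_top]
    have hne : (affineSpan ℝ (Set.range Ψ) : Set V).Nonempty :=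
      ⟨Ψ ⟨x0, hx0⟩, subset_affineSpan ℝ _ ⟨_, rfl⟩⟩
    rw [← AffineSubspace.direction_eq_top_iff_of_nonempty hne]
    by_contra hD
    obtain ⟨f, hf0, hf⟩ := Submodule.exists_le_ker_of_lt_top _ (lt_top_iff_ne_top.2 hD)
    have hconst : ∀ x, f (Ψ x) = f (Ψ ⟨x0, hx0⟩) := by
      intro x
      have : Ψ x -ᵥ Ψ ⟨x0, hx0⟩ ∈ (affineSpan ℝ (Set.range Ψ)).direction :=
        AffineSubspace.vsub_mem_direction (subset_affineSpan ℝ _ ⟨_, rfl⟩)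
          (subset_affineSpan ℝ _ ⟨_, rfl⟩)
      have := hf this
      rw [LinearMap.mem_ker, vsub_eq_sub, map_sub] at this
      linarith
    rcases le_total (f (Ψ ⟨x0, hx0⟩)) 0 with h | h
    · exact hf0 (key f fun x => by rw [hconst]; exact h)
    · apply hf0
      have := key (-f) fun x => by rw [LinearMap.neg_apply, hconst]; linarith
      exact neg_eq_zero.1 this
  have hconv := convex_convexHull ℝ (Set.range Ψ)
  have h0 : (0 : V) ∈ interior (convexHull ℝ (Set.range Ψ)) := by
    by_contra h0
    obtain ⟨f, hf⟩ := geometric_hahn_banach_open_point hconv.interior isOpen_interior h0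
    rw [map_zero] at hf
    have hle : ∀ x, f (Ψ x) ≤ 0 := by
      intro x
      have hx : Ψ x ∈ closure (interior (convexHull ℝ (Set.range Ψ))) := by
        rw [hconv.closure_interior_eq_closure_of_nonempty_interior hint]
        exact subset_closure (subset_convexHull ℝ _ ⟨x, rfl⟩)
      have hcl : IsClosed {v : V | f v ≤ 0} := isClosed_le f.continuous continuous_const
      exact closure_minimal (fun v hv => (hf v hv).le) hcl hx
    have hz := key f.toLinearMap hle
    obtain ⟨v, hv⟩ := hint
    have h1 := hf v hv
    have h2 : f v = 0 := by
      have := congrArg (fun L => L v) hz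
      simpa using this
    linarith
  obtain ⟨U, hU, hUeq⟩ := isOpen_induced_iff.1
    (isOpen_interior (s := convexHull ℝ (Set.range Ψ)))
  have himg : ∀ v : V, v ∈ convexHull ℝ (Set.range Ψ) →
      (v : Fin m → ℝ) ∈ convexHull ℝ (Set.range Φ) := by
    intro v hv
    have : V.subtype v ∈ V.subtype '' (convexHull ℝ (Set.range Ψ)) := ⟨v, hv, rfl⟩
    rw [LinearMap.image_convexHull, ← Set.range_comp] at this
    exact this
  have hC0 : (0 : Fin m → ℝ) ∈ convexHull ℝ (Set.range Φ) := himg 0 (interior_subset h0)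
  have hCV : convexHull ℝ (Set.range Φ) ⊆ V :=
    convexHull_min Submodule.subset_span V.convex
  have hAV : affineSpan ℝ (convexHull ℝ (Set.range Φ)) ≤ V.toAffineSubspace :=
    affineSpan_le.2 hCV
  have hUV : ∀ v ∈ V, v ∈ U → v ∈ convexHull ℝ (Set.range Φ) := by
    intro v hv hvU
    have : (⟨v, hv⟩ : V) ∈ ((↑) : V → Fin m → ℝ) ⁻¹' U := hvU
    rw [hUeq] at this
    exact himg _ (interior_subset this)
  have h0U : (0 : Fin m → ℝ) ∈ U := by
    rw [← hUeq] at h0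
    exact h0
  refine ⟨⟨0, subset_affineSpan ℝ _ hC0⟩, ?_, rfl⟩
  refine mem_interior.2 ⟨((↑) : affineSpan ℝ (convexHull ℝ (Set.range Φ)) → Fin m → ℝ) ⁻¹' U,
    ?_, hU.preimage continuous_subtype_val, h0U⟩
  intro v hv
  exact hUV v (hAV v.2) hv

end helpers

/-- a finitely constrained hypothesis is properly constrained iff
`sup_{P ∈ H} P({x}) > 0` for every `x ∈ X`; moreover, if `H` is properly constrained then
every constraint for `H` is proper, and there is `A : X → [1,∞)` dominating every
e-variable. -/
theorem statement5 {n : ℕ} {X : Set (EuclideanSpace ℝ (Fin n))}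
    (hXc : IsClosed X) (hXne : X.Nonempty)
    (H : Set (Measure X)) (hHne : H.Nonempty) (hfc : FinitelyConstrained H) :
    (ProperlyConstrained H ↔ ∀ x : X, 0 < ⨆ P ∈ H, P {x}) ∧
    (ProperlyConstrained H →
      (∀ (m : ℕ) (Φ : X → Fin m → ℝ), IsConstraint H Φ → IsProperConstraint H Φ) ∧
      ∃ A : X → ℝ, (∀ x, 1 ≤ A x) ∧ ∀ E : X → ℝ, IsEVar H E → ∀ x, E x ≤ A x) := by
  have hsup : ∀ x : X, (0 < ⨆ P ∈ H, P {x}) ↔ ∃ P ∈ H, 0 < P {x} := by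
    intro x
    simp only [lt_iSup_iff, exists_prop]
  have hfwd : ProperlyConstrained H → ∀ x : X, ∃ P ∈ H, 0 < P {x} := by
    rintro ⟨m, Φ, h⟩ x
    exact atom_of_proper h x
  refine ⟨⟨fun h x => (hsup x).2 (hfwd h x), fun h => ?_⟩, fun h => ⟨?_, ?_⟩⟩
  · obtain ⟨m, Φ, hΦ⟩ := hfc
    exact ⟨m, Φ, proper_of_atom hXne hΦ fun x => (hsup x).1 (h x)⟩
  · intro m Φ hΦ
    exact proper_of_atom hXne hΦ (hfwd h)
  · obtain ⟨m, Φ, hΦ⟩ := hfc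
    choose P hP hpos using hfwd h
    have hprob : ∀ x, IsProbabilityMeasure (P x) := fun x => by
      have := hP x
      rw [hΦ.2] at this
      exact this.1
    have hreal : ∀ x, 0 < (P x {x}).toReal := fun x =>
      ENNReal.toReal_pos (hpos x).ne' (measure_ne_top _ _)
    refine ⟨fun x => ((P x {x}).toReal)⁻¹, fun x => ?_, fun E hE x => ?_⟩
    · refine (one_le_inv₀ (hreal x)).2 ?_
      exact ENNReal.toReal_le_of_le_ofReal zero_le_one (by simpa using prob_le_one)
    · have h1 : ENNReal.ofReal (E x) * P x {x} ≤ 1 := by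
        refine le_trans ?_ (hE.2.2 _ (hP x))
        rw [← lintegral_singleton (fun y => ENNReal.ofReal (E y)) x]
        exact setLIntegral_le_lintegral _ _
      have h2 := ENNReal.toReal_mono ENNReal.one_ne_top h1
      rw [ENNReal.toReal_mul, ENNReal.toReal_ofReal (hE.2.1 x), ENNReal.toReal_one] at h2
      beta_reduce; rw [← one_div]
      exact (le_div_iff₀ (hreal x)).2 h2
end

section
/- Let X be a nonempty closed subset of ℝⁿ and H a properly constrained hypothesis on X. Then for every x ∈ X there exists P ∈ H whose support is a finite set containing x. -/
open MeasureTheory Set ENNReal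

/-- A small negative multiple of any point of `s` lies in the hull of `s`. -/
lemma aux_neg_mem {m : ℕ} (s : Set (Fin m → ℝ))
    (h0 : (0 : Fin m → ℝ) ∈ intrinsicInterior ℝ (convexHull ℝ s)) (v : Fin m → ℝ) (hv : v ∈ s) :
    ∃ t : ℝ, 0 < t ∧ (-t) • v ∈ convexHull ℝ s := by
  obtain ⟨y, hy, hy0⟩ := mem_intrinsicInterior.1 h0
  have h0A : (0 : Fin m → ℝ) ∈ affineSpan ℝ (convexHull ℝ s) := hy0 ▸ y.2
  have hvA : v ∈ affineSpan ℝ (convexHull ℝ s) :=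
    subset_affineSpan ℝ _ (subset_convexHull ℝ s hv)
  have hmem : ∀ t : ℝ, (-t) • v ∈ affineSpan ℝ (convexHull ℝ s) := by
    intro t
    have := AffineMap.lineMap_mem (-t) h0A hvA
    simpa [AffineMap.lineMap_apply] using this
  let f : ℝ → affineSpan ℝ (convexHull ℝ s) := fun t => ⟨(-t) • v, hmem t⟩
  have hf : Continuous f := by
    apply Continuous.subtype_mk
    fun_prop
  have hf0 : f 0 = y := by
    apply Subtype.ext
    simp [f, hy0]
  have hn : f ⁻¹' (interior ((↑) ⁻¹' (convexHull ℝ s))) ∈ nhds (0 : ℝ) :=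
    (isOpen_interior.preimage hf).mem_nhds (by simpa [hf0] using hy)
  obtain ⟨e, he, hb⟩ := Metric.mem_nhds_iff.1 hn
  refine ⟨e / 2, by positivity, ?_⟩
  have : e / 2 ∈ Metric.ball (0 : ℝ) e := by
    simp [abs_of_pos he]
    linarith
  have h2 := interior_subset (s := ((↑) ⁻¹' (convexHull ℝ s) : Set (affineSpan ℝ (convexHull ℝ s)))) (hb this)
  exact h2

/-- Properties of finitely supported measures. -/
lemma aux_measure {n m : ℕ} {X : Set (EuclideanSpace ℝ (Fin n))} (Φ : X → Fin m → ℝ)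
    {ι : Type} [Fintype ι] (w : ι → ℝ) (y : ι → X) (hw : ∀ i, 0 ≤ w i)
    (hs : ∑ i, w i = 1) (hz : ∑ i, w i • Φ (y i) = 0) (j : ι) (hj : 0 < w j) :
    ∃ P : Measure X, IsProbabilityMeasure P ∧ MemPPhi P Φ ∧ ∫ x, Φ x ∂P = 0 ∧
      (msupport P).Finite ∧ y j ∈ msupport P := by
  classical
  let P : Measure X := ∑ i, ENNReal.ofReal (w i) • Measure.dirac (y i)
  have hP : ∀ s : Set X, P s = ∑ i, ENNReal.ofReal (w i) * s.indicator 1 (y i) := by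
    intro s
    simp [P, Measure.finsetSum_apply]
  refine ⟨P, ⟨?_⟩, ?_, ?_, ?_, ?_⟩
  · rw [hP]
    simp [← ENNReal.ofReal_sum_of_nonneg (fun i _ => hw i), hs]
  · unfold MemPPhi
    simp only [P, lintegral_finsetSum_measure, lintegral_smul_measure, lintegral_dirac]
    rw [ENNReal.sum_lt_top]
    intro i _
    exact ENNReal.mul_lt_top ENNReal.ofReal_lt_top ENNReal.ofReal_lt_top
  · simp only [P]
    rw [integral_finsetSum_measure]
    · simp only [integral_smul_measure, integral_dirac, ENNReal.toReal_ofReal (hw _)]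
      exact hz
    · intro i _
      exact (integrable_dirac (by simp)).smul_measure ENNReal.ofReal_ne_top
  · refine (Set.finite_range y).subset ?_
    intro x hx
    by_contra hxy
    have := hx (Set.range y)ᶜ (Set.finite_range y).isClosed.isOpen_compl hxy
    rw [hP] at this
    simp at this
  · intro U _ hxU
    rw [hP]
    refine lt_of_lt_of_le ?_ (Finset.single_le_sum (fun i _ => zero_le) (Finset.mem_univ j))
    simp [hxU, hj]

/-- if `H` is properly constrained, then every `x ∈ X` lies in the support
of some `P ∈ H` whose support is finite. -/
theorem statement6 {n : ℕ} {X : Set (EuclideanSpace ℝ (Fin n))}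
    (hXc : IsClosed X) (hXne : X.Nonempty)
    (H : Set (Measure X)) (hHne : H.Nonempty) (hpc : ProperlyConstrained H) :
    ∀ x : X, ∃ P ∈ H, (msupport P).Finite ∧ x ∈ msupport P := by
  intro x
  obtain ⟨m, Φ, ⟨hc, rfl⟩, h0⟩ := hpc
  obtain ⟨t, ht, hmem⟩ := aux_neg_mem _ h0 (Φ x) ⟨x, rfl⟩
  obtain ⟨ι, _, w, z, hw, hs, hz, hsum⟩ := mem_convexHull_iff_exists_fintype.1 hmem
  choose y hy using hz
  obtain ⟨P, h1, h2, h3, h4, h5⟩ := aux_measure Φ (ι := Option ι)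
    (fun o => (1 + t)⁻¹ * o.elim t w) (fun o => o.elim x y)
    (by
      rintro (_ | i)
      · simp; positivity
      · have := hw i
        simp; positivity)
    (by
      rw [← Finset.mul_sum, Fintype.sum_option]
      simp [hs]
      field_simp
      ring)
    (by
      simp only [mul_smul]
      rw [← Finset.smul_sum, Fintype.sum_option]
      simp [hy, hsum])
    none (by simp; positivity)
  exact ⟨P, ⟨h1, h2, h3⟩, h4, h5⟩
end

section
/- Let X be a nonempty closed subset of ℝⁿ, H a properly constrained hypothesis on X, and Φ : X → ℝᵐ a proper constraint for H. Then Φ is a minimal constraint (i.e. 0 lies in the interior of the convex hull of Φ(X) in ℝᵐ) if and only if the components Φ₁,…,Φₘ : X → ℝ are linearly independent in the real vector space of functions X → ℝ. -/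
open MeasureTheory Set ENNReal

/-- a proper constraint `Φ` is minimal (i.e. `0` lies in the interior of the
convex hull of `Φ(X)`) iff the components of `Φ` are linearly independent functions. -/
theorem statement7 {n m : ℕ} {X : Set (EuclideanSpace ℝ (Fin n))}
    (hXc : IsClosed X) (hXne : X.Nonempty)
    (H : Set (Measure X)) (hHne : H.Nonempty)
    (Φ : X → Fin m → ℝ) (hΦ : IsProperConstraint H Φ) :
    (0 : Fin m → ℝ) ∈ interior (convexHull ℝ (Set.range Φ)) ↔
      LinearIndependent ℝ (fun i : Fin m => (fun x : X => Φ x i)) := by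
  obtain ⟨-, h0⟩ := hΦ
  set C := convexHull ℝ (Set.range Φ) with hC
  have h0C : (0 : Fin m → ℝ) ∈ C := intrinsicInterior_subset h0
  have hspan : (affineSpan ℝ C : Set (Fin m → ℝ)) = Submodule.span ℝ (Set.range Φ) := by
    have h1 : affineSpan ℝ C = affineSpan ℝ (Set.range Φ) := affineSpan_convexHull _
    have h2 : (0 : Fin m → ℝ) ∈ affineSpan ℝ (Set.range Φ) := h1 ▸ subset_affineSpan ℝ C h0C
    have h3 : affineSpan ℝ (insert 0 (Set.range Φ)) = affineSpan ℝ (Set.range Φ) :=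
      affineSpan_insert_eq_affineSpan ℝ h2
    rw [h1, ← h3, affineSpan_insert_zero]
  constructor
  · intro hi
    have htop : affineSpan ℝ C = ⊤ :=
      (convex_convexHull ℝ (Set.range Φ)).interior_nonempty_iff_affineSpan_eq_top.1 ⟨0, hi⟩
    rw [htop] at hspan
    rw [Fintype.linearIndependent_iff]
    intro g hg i
    let f : (Fin m → ℝ) →ₗ[ℝ] ℝ := ∑ j, g j • LinearMap.proj j
    have hf : ∀ v, f v = ∑ j, g j * v j := by intro v; simp [f]
    have hle : Submodule.span ℝ (Set.range Φ) ≤ LinearMap.ker f := by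
      rw [Submodule.span_le]
      rintro _ ⟨x, rfl⟩
      have := congrFun hg x
      simp only [SetLike.mem_coe, LinearMap.mem_ker, hf]
      simpa using this
    have hm : Pi.single i (1 : ℝ) ∈ (Submodule.span ℝ (Set.range Φ) : Set (Fin m → ℝ)) := by
      rw [← hspan]; trivial
    have := hle hm
    rw [LinearMap.mem_ker, hf] at this
    simpa [Pi.single_apply] using this
  · intro hli
    have htop : Submodule.span ℝ (Set.range Φ) = ⊤ := by
      by_contra hne
      obtain ⟨f, hf0, hf⟩ := Submodule.exists_le_ker_of_lt_top _ (lt_top_iff_ne_top.2 hne)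
      apply hf0
      rw [Fintype.linearIndependent_iff] at hli
      have key := hli (fun i => f (Pi.single i 1)) (by
        funext x
        have hx : f (Φ x) = 0 := hf (Submodule.subset_span ⟨x, rfl⟩)
        rw [LinearMap.pi_apply_eq_sum_univ] at hx
        simp only [Finset.sum_apply, Pi.smul_apply, smul_eq_mul, Pi.zero_apply]
        rw [← hx]
        refine Finset.sum_congr rfl fun i _ => ?_
        rw [smul_eq_mul, mul_comm]
        congr 2
        funext j
        simp [Pi.single_apply, eq_comm])
      refine LinearMap.pi_ext' fun i => ?_
      ext
      simpa using key i
    rw [htop] at hspan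
    rw [mem_intrinsicInterior] at h0
    obtain ⟨y, hy, hy0⟩ := h0
    have hopen : IsOpen (affineSpan ℝ C : Set (Fin m → ℝ)) := by
      rw [hspan]; exact isOpen_univ
    have := hopen.isOpenMap_subtype_val.image_interior_subset _ (Set.mem_image_of_mem _ hy)
    rw [← hy0]
    exact interior_mono (Set.image_preimage_subset _ _) this
end

section
/- Let X be a nonempty closed subset of ℝⁿ. Every properly constrained hypothesis H on X admits a minimal constraint, i.e. a continuous Φ : X → ℝᵐ' for some m' with H = {P ∈ P_Φ : ⟨P,Φ⟩ = 0} and 0 in the interior of the convex hull of Φ(X). -/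
open MeasureTheory Set ENNReal

theorem memPPhi_iff {β : Type*} [TopologicalSpace β] [MeasurableSpace β]
    [SecondCountableTopology β] [OpensMeasurableSpace β] {Y : Set β} {k : ℕ}
    (P : Measure Y) (Φ : Y → Fin k → ℝ) (hΦ : Continuous Φ) :
    MemPPhi P Φ ↔ Integrable Φ P := by
  have hc : Continuous (fun x => ∑ i, |Φ x i|) := by fun_prop
  have h1 : MemPPhi P Φ ↔ Integrable (fun x => ∑ i, |Φ x i|) P := by
    unfold MemPPhi
    rw [← hasFiniteIntegral_iff_ofReal
      (Filter.Eventually.of_forall fun x => Finset.sum_nonneg fun i _ => abs_nonneg (Φ x i))]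
    exact ⟨fun h => ⟨hc.aestronglyMeasurable, h⟩, fun h => h.2⟩
  rw [h1]
  constructor
  · intro h
    refine h.mono' hΦ.aestronglyMeasurable (Filter.Eventually.of_forall fun x => ?_)
    rw [pi_norm_le_iff_of_nonneg (Finset.sum_nonneg fun i _ => abs_nonneg (Φ x i))]
    intro i
    rw [Real.norm_eq_abs]
    exact Finset.single_le_sum (f := fun i => |Φ x i|) (fun i _ => abs_nonneg _)
      (Finset.mem_univ i)
  · intro h
    exact integrable_finsetSum _ fun i _ => (Integrable.eval h i).abs

/-- every properly constrained hypothesis admits a minimal constraint. -/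
theorem statement8 {n : ℕ} {X : Set (EuclideanSpace ℝ (Fin n))}
    (hXc : IsClosed X) (hXne : X.Nonempty)
    (H : Set (Measure X)) (hHne : H.Nonempty) (hpc : ProperlyConstrained H) :
    ∃ (m' : ℕ) (Φ : X → Fin m' → ℝ), IsMinimalConstraint H Φ := by
  obtain ⟨m, Φ, ⟨hΦ, hH⟩, h0⟩ := hpc
  set S : Submodule ℝ (Fin m → ℝ) := Submodule.span ℝ (Set.range Φ) with hS
  let e : S ≃ₗ[ℝ] (Fin (Module.finrank ℝ S) → ℝ) := (Module.finBasis ℝ S).equivFun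
  obtain ⟨π, hπ⟩ := S.subtype.exists_leftInverse_of_injective S.ker_subtype
  let L : (Fin m → ℝ) →L[ℝ] (Fin (Module.finrank ℝ S) → ℝ) :=
    LinearMap.toContinuousLinearMap (e.toLinearMap ∘ₗ π)
  let J : (Fin (Module.finrank ℝ S) → ℝ) →L[ℝ] (Fin m → ℝ) :=
    LinearMap.toContinuousLinearMap (S.subtype ∘ₗ e.symm.toLinearMap)
  have hπ' : ∀ s : S, π s = s := fun s => LinearMap.congr_fun hπ s
  have hLJ : ∀ y, L (J y) = y := by
    intro y
    change e (π ((e.symm y : S) : Fin m → ℝ)) = y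
    rw [hπ', e.apply_symm_apply]
  have hJL : ∀ z ∈ S, J (L z) = z := by
    intro z hz
    change ((e.symm (e (π z)) : S) : Fin m → ℝ) = z
    rw [e.symm_apply_apply, hπ' ⟨z, hz⟩]
  have hJS : ∀ y, J y ∈ S := fun y => (e.symm y).2
  have hJΦ : Φ = fun x => J (L (Φ x)) :=
    funext fun x => (hJL _ (Submodule.subset_span ⟨x, rfl⟩)).symm
  have hcL : Continuous (fun x => L (Φ x)) := L.continuous.comp hΦ
  refine ⟨_, fun x => L (Φ x), ⟨hcL, ?_⟩, ?_⟩
  · rw [hH]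
    ext P
    simp only [Set.mem_setOf_eq, memPPhi_iff P Φ hΦ, memPPhi_iff P _ hcL]
    refine and_congr_right fun _ => ⟨fun ⟨hi, hz⟩ => ?_, fun ⟨hi, hz⟩ => ?_⟩
    · refine ⟨L.integrable_comp hi, ?_⟩
      rw [L.integral_comp_comm hi, hz, map_zero]
    · rw [hJΦ]
      refine ⟨J.integrable_comp hi, ?_⟩
      rw [J.integral_comp_comm hi, hz, map_zero]
  · have h0C : (0 : Fin m → ℝ) ∈ convexHull ℝ (Set.range Φ) := intrinsicInterior_subset h0
    have hr : Set.range (fun x => L (Φ x)) = L '' Set.range Φ := Set.range_comp L Φ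
    have hhull : convexHull ℝ (L '' Set.range Φ) = L '' convexHull ℝ (Set.range Φ) :=
      (L.toLinearMap.image_convexHull _).symm
    rw [hr, hhull]
    have haff : ∀ z ∈ S, z ∈ affineSpan ℝ (convexHull ℝ (Set.range Φ)) := by
      intro z hz
      have h0A := subset_affineSpan ℝ _ h0C
      have hd : z ∈ (affineSpan ℝ (convexHull ℝ (Set.range Φ))).direction := by
        refine (Submodule.span_le.2 ?_ : S ≤ _) hz
        rintro _ ⟨x, rfl⟩
        have := AffineSubspace.vsub_mem_direction
          (subset_affineSpan ℝ _ (subset_convexHull ℝ _ (Set.mem_range_self x))) h0A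
        simpa using this
      simpa using AffineSubspace.vadd_mem_of_mem_direction hd h0A
    obtain ⟨w, hw, hw0⟩ := h0
    obtain ⟨V, hVs, hVo, hwV⟩ := mem_interior.1 hw
    obtain ⟨U, hU, rfl⟩ := isOpen_induced_iff.1 hVo
    refine mem_interior.2 ⟨J ⁻¹' U, ?_, hU.preimage J.continuous, ?_⟩
    · intro y hy
      exact ⟨J y, hVs (a := ⟨J y, haff _ (hJS y)⟩) hy, hLJ y⟩
    · have : (w : Fin m → ℝ) ∈ U := hwV
      rw [hw0] at this
      simpa using this
end

section
/- Let X be a nonempty closed subset of ℝⁿ and H a properly constrained hypothesis on X. If Φ : X → ℝᵐ and Φ' : X → ℝᵐ' are both constraints for H, then Span Φ = Span Φ', where Span Φ = {x ↦ λ·Φ(x) : λ ∈ ℝᵐ} is the linear span of the components of Φ in the vector space of real-valued functions on X. -/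
open MeasureTheory Set ENNReal

/-- nonnegative finitely supported weights annihilating `Φ` -/
def AnnCone {α : Type*} {m : ℕ} (Φ : α → Fin m → ℝ) : Set (α →₀ ℝ) :=
  {w | 0 ≤ w ∧ ∀ i, (w.sum fun x a => a * Φ x i) = 0}

lemma annCone_sub {n m m' : ℕ} {X : Set (EuclideanSpace ℝ (Fin n))}
    (H : Set (Measure X)) (Φ : X → Fin m → ℝ) (Φ' : X → Fin m' → ℝ)
    (hΦ : IsConstraint H Φ) (hΦ' : IsConstraint H Φ') : AnnCone Φ ⊆ AnnCone Φ' := by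
  classical
  rintro w ⟨hw, hs⟩
  refine ⟨hw, ?_⟩
  by_cases h0 : w = 0
  · subst h0; simp
  have hw' : ∀ x, 0 ≤ w x := fun x => hw x
  set W : ℝ := ∑ x ∈ w.support, w x with hW
  have hWpos : 0 < W := by
    obtain ⟨x, hx⟩ := Finsupp.support_nonempty_iff.2 h0
    exact Finset.sum_pos (fun y hy => lt_of_le_of_ne (hw' y) (Ne.symm (Finsupp.mem_support_iff.1 hy))) ⟨x, hx⟩
  set P : Measure X := ∑ x ∈ w.support, ENNReal.ofReal (w x / W) • Measure.dirac x with hP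
  have hprob : IsProbabilityMeasure P := by
    constructor
    simp only [hP, Measure.coe_finsetSum, Finset.sum_apply, Measure.smul_apply, measure_univ,
      smul_eq_mul, mul_one]
    rw [← ENNReal.ofReal_sum_of_nonneg (fun x _ => div_nonneg (hw' x) hWpos.le),
      ← Finset.sum_div, ← hW, div_self hWpos.ne', ENNReal.ofReal_one]
  have hmem : ∀ {k : ℕ} (Ψ : X → Fin k → ℝ), MemPPhi P Ψ := by
    intro k Ψ
    unfold MemPPhi
    rw [hP, lintegral_finsetSum_measure]
    refine ENNReal.sum_lt_top.2 fun x _ => ?_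
    rw [lintegral_smul_measure, lintegral_dirac]
    exact ENNReal.mul_lt_top ENNReal.ofReal_lt_top ENNReal.ofReal_lt_top
  have hIntP : ∀ {k : ℕ} (Ψ : X → Fin k → ℝ),
      ∫ x, Ψ x ∂P = W⁻¹ • fun i => (w.sum fun x a => a * Ψ x i) := by
    intro k Ψ
    rw [hP, integral_finsetSum_measure]
    · ext i
      simp only [integral_smul_measure, integral_dirac, Finset.sum_apply, Pi.smul_apply,
        smul_eq_mul, Finsupp.sum, Finset.mul_sum]
      refine Finset.sum_congr rfl fun x _ => ?_
      rw [ENNReal.toReal_ofReal (div_nonneg (hw' x) hWpos.le)]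
      ring
    · intro x _
      exact (integrable_dirac (by simp)).smul_measure ENNReal.ofReal_ne_top
  have hPH : P ∈ H := by
    rw [hΦ.2]
    refine ⟨hprob, hmem Φ, ?_⟩
    rw [hIntP]
    ext i
    simp [hs i]
  rw [hΦ'.2] at hPH
  have h := hPH.2.2
  rw [hIntP] at h
  intro i
  have := congrFun h i
  simpa [hWpos.ne'] using this

lemma proper_pos {α : Type*} {m : ℕ} (Φ : α → Fin m → ℝ)
    (h : (0 : Fin m → ℝ) ∈ intrinsicInterior ℝ (convexHull ℝ (Set.range Φ))) (x : α) :
    ∃ w ∈ AnnCone Φ, 0 < w x := by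
  classical
  have key : convexHull ℝ (Set.range Φ) ⊆
      {y | ∃ w : α →₀ ℝ, 0 ≤ w ∧ ∀ i, (w.sum fun x a => a * Φ x i) = y i} := by
    refine convexHull_min ?_ ?_
    · rintro _ ⟨z, rfl⟩
      exact ⟨Finsupp.single z 1, by simp, by simp⟩
    · rintro y ⟨w, hw, hy⟩ z ⟨v, hv, hz⟩ a b ha hb _
      refine ⟨a • w + b • v, add_nonneg (smul_nonneg ha hw) (smul_nonneg hb hv), fun i => ?_⟩
      rw [Finsupp.sum_add_index' (by simp) (by intros; ring),
        Finsupp.sum_smul_index (by simp), Finsupp.sum_smul_index (by simp)]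
      simp only [mul_assoc, ← Finsupp.mul_sum, hy, hz]
      simp
  have h0 := intrinsicInterior_subset h
  obtain ⟨y, hy, hy0⟩ := h
  have hmem : ∀ t : ℝ, -t • Φ x ∈ affineSpan ℝ (convexHull ℝ (Set.range Φ)) := by
    intro t
    have := AffineMap.lineMap_mem (-t) (subset_affineSpan ℝ _ h0)
      (subset_affineSpan ℝ _ (subset_convexHull ℝ _ (mem_range_self x)))
    simpa [AffineMap.lineMap_apply] using this
  let g : ℝ → affineSpan ℝ (convexHull ℝ (Set.range Φ)) := fun t => ⟨-t • Φ x, hmem t⟩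
  have hg : Continuous g := by
    refine Continuous.subtype_mk ?_ _
    fun_prop
  have hg0 : g 0 = y := by
    apply Subtype.ext
    rw [hy0]
    simp [g]
  have hev := hg.continuousAt.preimage_mem_nhds (x := (0:ℝ))
    (by rw [hg0]; exact isOpen_interior.mem_nhds hy)
  obtain ⟨ε, hε, hb⟩ := Metric.mem_nhds_iff.1 hev
  have h1 : (ε/2) ∈ Metric.ball (0:ℝ) ε := by
    simp [abs_of_pos hε, hε]
  have h2 : -(ε/2) • Φ x ∈ convexHull ℝ (Set.range Φ) := by
    have h3 := interior_subset (hb h1)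
    exact h3
  obtain ⟨w, hw, hwy⟩ := key h2
  refine ⟨w + Finsupp.single x (ε/2),
    ⟨add_nonneg hw (Finsupp.single_nonneg.2 (by positivity)), fun i => ?_⟩, ?_⟩
  · rw [Finsupp.sum_add_index' (by simp) (by intros; ring), hwy]
    simp
  · have := hw x
    simp only [Finsupp.coe_zero, Pi.zero_apply] at this
    simp only [Finsupp.add_apply, Finsupp.single_eq_same]
    positivity

lemma ann_dominate {α : Type*} {m : ℕ} (Φ : α → Fin m → ℝ)
    (h : ∀ x, ∃ w ∈ AnnCone Φ, 0 < w x) (v : α →₀ ℝ) :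
    ∃ w ∈ AnnCone Φ, v + w ∈ {u : α →₀ ℝ | 0 ≤ u} := by
  classical
  choose w hw hpos using h
  refine ⟨∑ x ∈ v.support, (|v x| / w x x) • w x, ⟨?_, fun i => ?_⟩, ?_⟩
  · exact Finset.sum_nonneg fun x _ => smul_nonneg (div_nonneg (abs_nonneg _) (hpos x).le) (hw x).1
  · rw [← Finsupp.sum_finsetSum_index (by simp) (by intros; ring)]
    refine Finset.sum_eq_zero fun x _ => ?_
    rw [Finsupp.sum_smul_index (by simp)]
    simp only [mul_assoc, ← Finsupp.mul_sum, (hw x).2 i, mul_zero]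
  · intro y
    simp only [Finsupp.coe_zero, Pi.zero_apply, Finsupp.add_apply, Finsupp.finsetSum_apply,
      Finsupp.smul_apply, smul_eq_mul]
    have hnn : ∀ x ∈ v.support, 0 ≤ |v x| / w x x * w x y := fun x _ =>
      mul_nonneg (div_nonneg (abs_nonneg _) (hpos x).le) ((hw x).1 y)
    by_cases hy : y ∈ v.support
    · have := Finset.single_le_sum hnn hy
      rw [div_mul_cancel₀ _ (hpos y).ne'] at this
      linarith [neg_abs_le (v y)]
    · rw [Finsupp.notMem_support_iff.1 hy, zero_add]
      exact Finset.sum_nonneg hnn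

lemma ann_span_le {α : Type*} {m m' : ℕ} (Φ : α → Fin m → ℝ) (Φ' : α → Fin m' → ℝ)
    (h : ∀ x, ∃ w ∈ AnnCone Φ, 0 < w x) (hsub : AnnCone Φ ⊆ AnnCone Φ') :
    Submodule.span ℝ (Set.range fun i : Fin m' => fun x : α => Φ' x i) ≤
      Submodule.span ℝ (Set.range fun i : Fin m => fun x : α => Φ x i) := by
  classical
  rw [Submodule.span_le]
  rintro _ ⟨j, rfl⟩
  let L : (α → ℝ) → ((α →₀ ℝ) →ₗ[ℝ] ℝ) := fun f => Finsupp.lsum ℝ fun x => LinearMap.mulRight ℝ (f x)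
  have hL : ∀ f v, L f v = v.sum fun x a => a * f x := fun f v => by
    simp only [L, Finsupp.lsum_apply]
    rfl
  have hk : L (fun x => Φ' x j) ∈ Submodule.span ℝ (Set.range fun i : Fin m => L (fun x => Φ x i)) := by
    refine mem_span_of_iInf_ker_le_ker ?_
    intro v hv
    simp only [Submodule.mem_iInf, LinearMap.mem_ker] at hv ⊢
    obtain ⟨w, hw, hvw⟩ := ann_dominate Φ h v
    have h1 : v + w ∈ AnnCone Φ := by
      refine ⟨hvw, fun i => ?_⟩
      rw [← hL (fun x => Φ x i), map_add, hv i, hL, hw.2 i, add_zero]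
    have h2 := (hsub h1).2 j
    rw [← hL (fun x => Φ' x j), map_add, hL _ w, (hsub hw).2 j, add_zero] at h2
    exact h2
  let E : ((α →₀ ℝ) →ₗ[ℝ] ℝ) →ₗ[ℝ] (α → ℝ) :=
    { toFun := fun l x => l (Finsupp.single x 1)
      map_add' := fun _ _ => rfl
      map_smul' := fun _ _ => rfl }
  have hE : ∀ f, E (L f) = f := by
    intro f
    ext x
    change L f (Finsupp.single x 1) = f x
    simp [hL]
  have := Submodule.mem_map_of_mem (f := E) hk
  rw [Submodule.map_span, ← Set.range_comp, hE] at this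
  simp only [Function.comp_def, hE] at this
  exact this

/-- any two constraints of a properly constrained hypothesis have the same
linear span (of their components) in the space of real functions on `X`. -/
theorem statement10 {n m m' : ℕ} {X : Set (EuclideanSpace ℝ (Fin n))}
    (hXc : IsClosed X) (hXne : X.Nonempty)
    (H : Set (Measure X)) (hHne : H.Nonempty) (hpc : ProperlyConstrained H)
    (Φ : X → Fin m → ℝ) (Φ' : X → Fin m' → ℝ)
    (hΦ : IsConstraint H Φ) (hΦ' : IsConstraint H Φ') :
    Submodule.span ℝ (Set.range fun i : Fin m => fun x : X => Φ x i) =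
      Submodule.span ℝ (Set.range fun i : Fin m' => fun x : X => Φ' x i) := by
  obtain ⟨k, Ψ, hΨ, h0⟩ := hpc
  have aux : ∀ {l : ℕ} (Θ : X → Fin l → ℝ), IsConstraint H Θ →
      Submodule.span ℝ (Set.range fun i : Fin l => fun x : X => Θ x i) =
        Submodule.span ℝ (Set.range fun i : Fin k => fun x : X => Ψ x i) := by
    intro l Θ hΘ
    have hp := proper_pos Ψ h0
    have h1 := annCone_sub H Ψ Θ hΨ hΘ
    refine le_antisymm (ann_span_le Ψ Θ hp h1)
      (ann_span_le Θ Ψ (fun x => ?_) (annCone_sub H Θ Ψ hΘ hΨ))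
    obtain ⟨w, hw, hx⟩ := hp x
    exact ⟨w, h1 hw, hx⟩
  rw [aux Φ hΦ, aux Φ' hΦ']
end

section
/- Let X be a nonempty closed subset of ℝⁿ, H a properly constrained hypothesis on X, and Φ : X → ℝᵐ a constraint for H. Then every element of the dual e-class E_H^∨ = {x ↦ 1 − λ·Φ(x) : λ ∈ Λ_Φ}, where Λ_Φ = {λ ∈ ℝᵐ : sup_{x∈X} λ·Φ(x) ≤ 1}, is a maximal e-variable for H. -/
open MeasureTheory Set ENNReal

lemma aux_memPPhi {n m : ℕ} {X : Set (EuclideanSpace ℝ (Fin n))} (P : Measure X)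
    (Φ : X → Fin m → ℝ) (hc : Continuous Φ) : MemPPhi P Φ ↔ Integrable Φ P := by
  have hci : ∀ i, Continuous fun x => Φ x i := fun i => (continuous_apply i).comp hc
  have hs : Continuous fun x => ∑ i, |Φ x i| :=
    continuous_finsetSum _ fun i _ => (hci i).abs
  have hn : ∀ x, 0 ≤ ∑ i, |Φ x i| := fun x => Finset.sum_nonneg fun i _ => abs_nonneg _
  constructor
  · intro h
    have hI : Integrable (fun x => ∑ i, |Φ x i|) P := by
      refine ⟨hs.aestronglyMeasurable, ?_⟩
      rw [hasFiniteIntegral_iff_ofReal (Filter.Eventually.of_forall hn)]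
      exact h
    refine hI.mono' hc.aestronglyMeasurable (Filter.Eventually.of_forall fun x => ?_)
    refine (pi_norm_le_iff_of_nonneg (hn x)).2 fun i => ?_
    rw [Real.norm_eq_abs]
    exact Finset.single_le_sum (f := fun i => |Φ x i|) (fun i _ => abs_nonneg _) (Finset.mem_univ i)
  · intro h
    have hI : Integrable (fun x => ∑ i, |Φ x i|) P :=
      integrable_finsetSum _ fun i _ => (h.eval i).abs
    have := hI.2
    rw [hasFiniteIntegral_iff_ofReal (Filter.Eventually.of_forall hn)] at this
    exact this

lemma aux_mix {n m : ℕ} {X : Set (EuclideanSpace ℝ (Fin n))}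
    (Φ : X → Fin m → ℝ) (P Q : Measure X) [IsProbabilityMeasure P] [IsProbabilityMeasure Q]
    (hP : Integrable Φ P) (hQ : Integrable Φ Q) (a b : ℝ) (ha : 0 ≤ a) (hb : 0 ≤ b)
    (hab : a + b = 1) :
    IsProbabilityMeasure (ENNReal.ofReal a • P + ENNReal.ofReal b • Q) ∧
    Integrable Φ (ENNReal.ofReal a • P + ENNReal.ofReal b • Q) ∧
    ∫ x, Φ x ∂(ENNReal.ofReal a • P + ENNReal.ofReal b • Q)
      = a • (∫ x, Φ x ∂P) + b • ∫ x, Φ x ∂Q := by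
  have h1 : Integrable Φ (ENNReal.ofReal a • P) := hP.smul_measure ENNReal.ofReal_ne_top
  have h2 : Integrable Φ (ENNReal.ofReal b • Q) := hQ.smul_measure ENNReal.ofReal_ne_top
  refine ⟨⟨?_⟩, h1.add_measure h2, ?_⟩
  · simp [← ENNReal.ofReal_add ha hb, hab]
  · rw [integral_add_measure h1 h2, integral_smul_measure, integral_smul_measure,
      ENNReal.toReal_ofReal ha, ENNReal.toReal_ofReal hb]

lemma aux_hull {n m : ℕ} {X : Set (EuclideanSpace ℝ (Fin n))}
    (Φ : X → Fin m → ℝ) {z : Fin m → ℝ}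
    (hz : z ∈ convexHull ℝ (Set.range Φ)) :
    ∃ P : Measure X, IsProbabilityMeasure P ∧ Integrable Φ P ∧ ∫ x, Φ x ∂P = z := by
  have hsub : convexHull ℝ (Set.range Φ) ⊆
      {z | ∃ P : Measure X, IsProbabilityMeasure P ∧ Integrable Φ P ∧ ∫ x, Φ x ∂P = z} := by
    refine convexHull_min ?_ ?_
    · rintro _ ⟨x, rfl⟩
      exact ⟨Measure.dirac x, inferInstance, integrable_dirac (by simp),
        integral_dirac _ _⟩
    · rintro y ⟨P, hP, hPi, rfl⟩ z ⟨Q, hQ, hQi, rfl⟩ a b ha hb hab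
      exact ⟨_, aux_mix Φ P Q hPi hQi a b ha hb hab⟩
  exact hsub hz

lemma aux_interior {m : ℕ} (s : Set (Fin m → ℝ)) (h0 : (0 : Fin m → ℝ) ∈ intrinsicInterior ℝ s)
    (v : Fin m → ℝ) (hv : v ∈ s) : ∃ ε : ℝ, 0 < ε ∧ -(ε • v) ∈ s := by
  obtain ⟨y, hy, hy0⟩ := h0
  have hvA : v ∈ affineSpan ℝ s := subset_affineSpan ℝ s hv
  have h0A : (0 : Fin m → ℝ) ∈ affineSpan ℝ s := hy0 ▸ y.2
  have hmem : ∀ t : ℝ, t • v ∈ affineSpan ℝ s := fun t => by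
    have := AffineMap.lineMap_mem t h0A hvA
    simpa [AffineMap.lineMap_apply] using this
  let g : ℝ → affineSpan ℝ s := fun t => ⟨t • v, hmem t⟩
  have hg : Continuous g := by
    refine Continuous.subtype_mk ?_ _
    fun_prop
  have hg0 : g 0 = y := Subtype.ext (by simp [g, hy0])
  have hnb : g ⁻¹' ((↑) ⁻¹' s) ∈ nhds (0 : ℝ) := by
    apply hg.continuousAt
    rw [hg0]
    exact mem_interior_iff_mem_nhds.1 hy
  obtain ⟨δ, hδ, hball⟩ := Metric.mem_nhds_iff.1 hnb
  refine ⟨δ / 2, by positivity, ?_⟩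
  have : -(δ/2) ∈ Metric.ball (0:ℝ) δ := by
    simp [abs_of_pos hδ]
    linarith
  have := hball this
  simpa [g] using this

/-- every element of the dual e-class of a properly constrained hypothesis
is a maximal e-variable. -/
theorem statement11 {n m : ℕ} {X : Set (EuclideanSpace ℝ (Fin n))}
    (hXc : IsClosed X) (hXne : X.Nonempty)
    (H : Set (Measure X)) (hHne : H.Nonempty) (hpc : ProperlyConstrained H)
    (Φ : X → Fin m → ℝ) (hΦ : IsConstraint H Φ) :
    ∀ E ∈ dualClass Φ, IsMaximalEVar H E := by
  rintro E ⟨l, hl, rfl⟩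
  obtain ⟨hc, hH⟩ := hΦ
  have hci : ∀ i, Continuous fun x => Φ x i := fun i => (continuous_apply i).comp hc
  have hEc : Continuous fun x => 1 - ∑ i, l i * Φ x i :=
    continuous_const.sub (continuous_finsetSum _ fun i _ => continuous_const.mul (hci i))
  have hE0 : ∀ x, 0 ≤ 1 - ∑ i, l i * Φ x i := fun x => sub_nonneg.2 (hl x (mem_univ x))
  have hE1 : ∀ P ∈ H, ∫⁻ x, ENNReal.ofReal (1 - ∑ i, l i * Φ x i) ∂P = 1 := by
    intro P hP
    rw [hH] at hP
    obtain ⟨hPp, hPm, hP0⟩ := hP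
    have hI := (aux_memPPhi P Φ hc).1 hPm
    have hIi : ∀ i ∈ Finset.univ, Integrable (fun x => l i * Φ x i) P :=
      fun i _ => (hI.eval i).const_mul _
    have hIs : Integrable (fun x => ∑ i, l i * Φ x i) P := integrable_finsetSum _ hIi
    rw [← ofReal_integral_eq_lintegral_ofReal (f := fun x => 1 - ∑ i, l i * Φ x i) ((integrable_const 1).sub hIs)
      (Filter.Eventually.of_forall hE0)]
    have hz : ∀ i, ∫ x, Φ x i ∂P = 0 := fun i => by
      rw [← eval_integral (fun i => hI.eval i), hP0]; rfl
    have : ∫ x, (1 - ∑ i, l i * Φ x i) ∂P = 1 := by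
      rw [integral_sub (integrable_const 1) hIs, integral_finsetSum _ hIi]
      simp [integral_const_mul, hz]
    simp [this]
  refine ⟨⟨hEc.measurable, hE0, fun P hP => (hE1 P hP).le⟩, ?_⟩
  rintro ⟨E', ⟨hm', h0', h1'⟩, hmaj, hne⟩
  obtain ⟨x₀, hx₀⟩ := Function.ne_iff.1 hne
  have hlt := lt_of_le_of_ne (hmaj x₀) hx₀.symm
  obtain ⟨k, Ψ, ⟨hΨc, hHΨ⟩, hΨ0⟩ := hpc
  obtain ⟨ε, hε, hz⟩ := aux_interior _ hΨ0 (Ψ x₀) (subset_convexHull ℝ _ ⟨x₀, rfl⟩)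
  obtain ⟨Q, hQ, hQi, hQz⟩ := aux_hull Ψ hz
  obtain ⟨hR, hRi, hRz⟩ := aux_mix Ψ (Measure.dirac x₀) Q (integrable_dirac (by simp)) hQi
    (ε / (1 + ε)) (1 / (1 + ε)) (by positivity) (by positivity) (by field_simp; ring)
  set R := ENNReal.ofReal (ε / (1 + ε)) • Measure.dirac x₀ + ENNReal.ofReal (1 / (1 + ε)) • Q
    with hRdef
  have hRH : R ∈ H := by
    rw [hHΨ]
    refine ⟨hR, (aux_memPPhi R Ψ hΨc).2 hRi, ?_⟩
    rw [hRz, hQz, integral_dirac, smul_neg, smul_smul]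
    rw [show 1 / (1 + ε) * ε = ε / (1 + ε) by ring, add_neg_cancel]
  have hRx : R {x₀} ≠ 0 := by
    have : 0 < ε / (1 + ε) := by positivity
    simp [hRdef, this]
  have hae : (fun x => ENNReal.ofReal (1 - ∑ i, l i * Φ x i)) =ᵐ[R]
      fun x => ENNReal.ofReal (E' x) := by
    refine ae_eq_of_ae_le_of_lintegral_le
      (Filter.Eventually.of_forall fun x => ENNReal.ofReal_le_ofReal (hmaj x)) ?_
      hm'.ennreal_ofReal.aemeasurable ?_
    · rw [hE1 R hRH]; simp
    · rw [hE1 R hRH]; exact h1' R hRH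
  apply hRx
  refine measure_mono_null ?_ hae
  rintro x rfl
  intro h
  have h' : ENNReal.ofReal (1 - ∑ i, l i * Φ x i) = ENNReal.ofReal (E' x) := h
  rw [ENNReal.ofReal_eq_ofReal_iff (hE0 x) (h0' x)] at h'
  exact hlt.ne h'
end

section
/- Let X be a nonempty closed subset of ℝⁿ, H a properly constrained hypothesis on X, and Φ : X → ℝᵐ a constraint for H. Then the dual e-class E_H^∨ = {x ↦ 1 − λ·Φ(x) : λ ∈ Λ_Φ}, where Λ_Φ = {λ ∈ ℝᵐ : sup_{x∈X} λ·Φ(x) ≤ 1}, is the optimal e-class for H: it is a majorising e-class and it is contained in every majorising e-class. -/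
open MeasureTheory Set ENNReal

lemma s12_meas {α : Type*} [MeasurableSpace α] [MeasurableSingletonClass α]
    (a : α →₀ ℝ) (ha : 0 ≤ a) (f : α → ℝ) (hf : ∀ x, 0 ≤ f x) :
    ∫⁻ x, ENNReal.ofReal (f x) ∂(∑ x ∈ a.support, ENNReal.ofReal (a x) • Measure.dirac x)
      = ENNReal.ofReal (Finsupp.linearCombination ℝ f a) := by
  rw [lintegral_finsetSum_measure, Finsupp.linearCombination_apply, Finsupp.sum,
    ENNReal.ofReal_sum_of_nonneg]
  · refine Finset.sum_congr rfl fun x _ => ?_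
    rw [lintegral_smul_measure, lintegral_dirac, smul_eq_mul, smul_eq_mul,
      ENNReal.ofReal_mul (ha x)]
  · intro x _
    exact mul_nonneg (ha x) (hf x)

lemma s12_int {α : Type*} [MeasurableSpace α] [MeasurableSingletonClass α] {m : ℕ}
    (a : α →₀ ℝ) (ha : 0 ≤ a) (f : α → Fin m → ℝ) :
    ∫ x, f x ∂(∑ x ∈ a.support, ENNReal.ofReal (a x) • Measure.dirac x)
      = Finsupp.linearCombination ℝ f a := by
  rw [integral_finsetSum_measure, Finsupp.linearCombination_apply, Finsupp.sum]
  · refine Finset.sum_congr rfl fun x _ => ?_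
    rw [integral_smul_measure, integral_dirac, ENNReal.toReal_ofReal (ha x)]
  · intro x _
    exact (integrable_dirac (by simp)).smul_measure ENNReal.ofReal_ne_top

/-- finitely supported members of `H` -/
lemma s12_mem {α : Type*} [TopologicalSpace α] [MeasurableSpace α]
    {X : Set α} [MeasurableSingletonClass X] {m : ℕ} {H : Set (Measure X)}
    {Φ : X → Fin m → ℝ} (h : IsConstraint H Φ) (a : X →₀ ℝ) (ha : 0 ≤ a)
    (h1 : Finsupp.linearCombination ℝ (fun _ : X => (1 : ℝ)) a = 1) :
    (∑ x ∈ a.support, ENNReal.ofReal (a x) • Measure.dirac x) ∈ H ↔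
      Finsupp.linearCombination ℝ Φ a = 0 := by
  rw [h.2]
  have e1 : IsProbabilityMeasure
      (∑ x ∈ a.support, ENNReal.ofReal (a x) • Measure.dirac x : Measure X) := by
    constructor
    have := s12_meas a ha (fun _ => 1) (fun _ => zero_le_one)
    rw [h1] at this
    simpa using this
  have e2 : MemPPhi (∑ x ∈ a.support, ENNReal.ofReal (a x) • Measure.dirac x) Φ := by
    unfold MemPPhi
    rw [s12_meas a ha _ (fun x => Finset.sum_nonneg fun i _ => abs_nonneg _)]
    exact ENNReal.ofReal_lt_top
  have e3 := s12_int a ha Φ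
  constructor
  · rintro ⟨-, -, h3⟩
    rw [← e3, h3]
  · intro h3
    exact ⟨e1, e2, by rw [e3, h3]⟩

lemma s12_proper {α : Type*} [TopologicalSpace α] [MeasurableSpace α]
    {X : Set α} {m : ℕ} {H : Set (Measure X)}
    {Ψ : X → Fin m → ℝ} (h : IsProperConstraint H Ψ) (x : X) :
    ∃ a : X →₀ ℝ, 0 ≤ a ∧ 0 < a x ∧
      Finsupp.linearCombination ℝ (fun _ : X => (1 : ℝ)) a = 1 ∧
      Finsupp.linearCombination ℝ Ψ a = 0 := by
  obtain ⟨-, h0⟩ := h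
  rw [mem_intrinsicInterior] at h0
  obtain ⟨y, hy, hy0⟩ := h0
  have hx : Ψ x ∈ affineSpan ℝ (convexHull ℝ (Set.range Ψ)) :=
    subset_affineSpan _ _ (subset_convexHull _ _ ⟨x, rfl⟩)
  have hy' : (0 : Fin m → ℝ) ∈ affineSpan ℝ (convexHull ℝ (Set.range Ψ)) := hy0 ▸ y.2
  have hm : ∀ t : ℝ, t • Ψ x ∈ affineSpan ℝ (convexHull ℝ (Set.range Ψ)) := by
    intro t
    have := AffineMap.lineMap_mem t hy' hx
    simpa [AffineMap.lineMap_apply] using this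
  let g : ℝ → affineSpan ℝ (convexHull ℝ (Set.range Ψ)) := fun t => ⟨t • Ψ x, hm t⟩
  have hg : Continuous g := by
    apply Continuous.subtype_mk
    fun_prop
  have hg0 : g 0 = y := by
    apply Subtype.ext
    simp [g, hy0]
  have hn : g ⁻¹' (interior ((↑) ⁻¹' (convexHull ℝ (Set.range Ψ)))) ∈ nhds (0 : ℝ) :=
    hg.continuousAt.preimage_mem_nhds (isOpen_interior.mem_nhds (by rw [hg0]; exact hy))
  obtain ⟨ε, hε, hb⟩ := Metric.mem_nhds_iff.1 hn
  have hmem : (-(ε/2)) • Ψ x ∈ convexHull ℝ (Set.range Ψ) := by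
    have : -(ε/2) ∈ Metric.ball (0 : ℝ) ε := by
      rw [mem_ball_zero_iff, Real.norm_eq_abs, abs_neg, abs_of_pos (by positivity)]
      linarith
    have h2 := interior_subset (Set.mem_preimage.1 (hb this))
    exact h2
  have hsub : convexHull ℝ (Set.range Ψ) ⊆
      {v | ∃ a : X →₀ ℝ, 0 ≤ a ∧ Finsupp.linearCombination ℝ (fun _ : X => (1 : ℝ)) a = 1 ∧
        Finsupp.linearCombination ℝ Ψ a = v} := by
    apply convexHull_min
    · rintro _ ⟨z, rfl⟩
      exact ⟨Finsupp.single z 1, by simp, by simp, by simp⟩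
    · rintro _ ⟨a, ha, ha1, rfl⟩ _ ⟨b, hb, hb1, rfl⟩ s t hs ht hst
      refine ⟨s • a + t • b, add_nonneg (smul_nonneg hs ha) (smul_nonneg ht hb), ?_, ?_⟩
      · rw [map_add, map_smul, map_smul, ha1, hb1]; simpa using hst
      · rw [map_add, map_smul, map_smul]
  obtain ⟨a, ha, ha1, haΨ⟩ := hsub hmem
  have hc : (0 : ℝ) < 1 + ε/2 := by positivity
  have hs : (0 : X →₀ ℝ) ≤ Finsupp.single x (ε/2) := by
    simp; positivity
  refine ⟨(1 + ε/2)⁻¹ • (a + Finsupp.single x (ε/2)),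
    smul_nonneg (by positivity) (add_nonneg ha hs), ?_, ?_, ?_⟩
  · have := ha x
    simp only [Finsupp.coe_zero, Pi.zero_apply] at this
    simp only [Finsupp.smul_apply, Finsupp.add_apply, Finsupp.single_eq_same, smul_eq_mul]
    positivity
  · rw [map_smul, map_add, ha1, Finsupp.linearCombination_single]
    simp only [smul_eq_mul, mul_one]
    field_simp
  · rw [map_smul, map_add, haΨ, Finsupp.linearCombination_single]
    simp

lemma s12_dual {α : Type*} {m : ℕ} (Φ : α → Fin m → ℝ) (F : α → ℝ)
    (hx : ∀ x, ∃ a : α →₀ ℝ, 0 ≤ a ∧ 0 < a x ∧ Finsupp.linearCombination ℝ Φ a = 0)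
    (hF : ∀ a : α →₀ ℝ, 0 ≤ a → Finsupp.linearCombination ℝ Φ a = 0 →
      0 ≤ Finsupp.linearCombination ℝ F a) :
    ∃ l : Fin m → ℝ, ∀ x, ∑ i, l i * Φ x i ≤ F x := by
  let T := Finsupp.linearCombination ℝ Φ
  let f : (α →₀ ℝ) →ₗ.[ℝ] ℝ :=
    ⟨LinearMap.ker T, (Finsupp.linearCombination ℝ F).comp (LinearMap.ker T).subtype⟩
  have key : ∀ y : α →₀ ℝ, ∃ d : α →₀ ℝ, T d = 0 ∧ 0 ≤ d + y := by
    intro y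
    induction y using Finsupp.induction_linear with
    | zero => exact ⟨0, by simp, by simp⟩
    | add y z hy hz =>
      obtain ⟨d, hd, hd'⟩ := hy
      obtain ⟨e, he, he'⟩ := hz
      refine ⟨d + e, by rw [map_add, hd, he, add_zero], ?_⟩
      rw [add_add_add_comm]
      exact add_nonneg hd' he'
    | single x r =>
      obtain ⟨a, ha, hax, hT⟩ := hx x
      refine ⟨(|r| / a x) • a, by rw [map_smul, show T a = 0 from hT, smul_zero], ?_⟩
      intro z
      have hz := ha z
      simp only [Finsupp.coe_zero, Pi.zero_apply] at hz
      simp only [Finsupp.coe_zero, Pi.zero_apply, Finsupp.add_apply, Finsupp.smul_apply,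
        smul_eq_mul]
      by_cases h : x = z
      · subst h
        rw [Finsupp.single_eq_same, div_mul_cancel₀ _ hax.ne']
        linarith [neg_abs_le r]
      · rw [Finsupp.single_eq_of_ne (by tauto)]
        positivity
  obtain ⟨g, hg, hg0⟩ := riesz_extension (PointedCone.positive ℝ (α →₀ ℝ)) f
    (fun d hd => hF d.1 hd d.2)
    (fun y => by
      obtain ⟨d, hd, hd'⟩ := key y
      exact ⟨⟨d, hd⟩, hd'⟩)
  have hk : (Finsupp.linearCombination ℝ F - g : (α →₀ ℝ) →ₗ[ℝ] ℝ) ∈ LinearMap.range T.dualMap := by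
    rw [LinearMap.range_dualMap_eq_dualAnnihilator_ker, Submodule.mem_dualAnnihilator]
    intro w hw
    have := hg ⟨w, hw⟩
    change g w = Finsupp.linearCombination ℝ F w at this
    rw [LinearMap.sub_apply, this, sub_self]
  obtain ⟨μ, hμ⟩ := hk
  refine ⟨fun i => μ (Pi.single i 1), fun x => ?_⟩
  have h1 := LinearMap.congr_fun hμ (Finsupp.single x 1)
  have h2 : 0 ≤ g (Finsupp.single x 1) := hg0 _ (by
    rw [PointedCone.mem_positive]; simp)
  have h3 : μ (Φ x) = ∑ i, μ (Pi.single i 1) * Φ x i := by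
    conv_lhs => rw [pi_eq_sum_univ' (Φ x)]
    rw [map_sum]
    refine Finset.sum_congr rfl fun i _ => ?_
    rw [map_smul, smul_eq_mul, mul_comm]
  simp [T] at h1
  simp only [← h3]
  linarith

lemma s12_expect {α : Type*} [TopologicalSpace α] [MeasurableSpace α]
    {X : Set α} [OpensMeasurableSpace X] {m : ℕ} {H : Set (Measure X)}
    {Φ : X → Fin m → ℝ} (h : IsConstraint H Φ) {P : Measure X} (hP : P ∈ H) (l : Fin m → ℝ) :
    IsProbabilityMeasure P ∧ Integrable (fun x => 1 - ∑ i, l i * Φ x i) P ∧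
      ∫ x, (1 - ∑ i, l i * Φ x i) ∂P = 1 := by
  rw [h.2] at hP
  obtain ⟨hp, hM, hI⟩ := hP
  have hc : ∀ i, Continuous fun x => Φ x i := fun i => (continuous_apply i).comp h.1
  have hint : ∀ i, Integrable (fun x => Φ x i) P := by
    intro i
    refine ⟨(hc i).aestronglyMeasurable, ?_⟩
    refine lt_of_le_of_lt (lintegral_mono fun x => ?_) hM
    rw [← ofReal_norm, Real.norm_eq_abs]
    exact ENNReal.ofReal_le_ofReal
      (Finset.single_le_sum (f := fun i => |Φ x i|) (fun i _ => abs_nonneg _) (Finset.mem_univ i))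
  have hi : Integrable (fun x => ∑ i, l i * Φ x i) P :=
    integrable_finsetSum _ fun i _ => (hint i).const_mul _
  refine ⟨hp, (integrable_const _).sub hi, ?_⟩
  rw [integral_sub (integrable_const _) hi,
    integral_finsetSum _ (fun i _ => (hint i).const_mul _)]
  have : ∀ i, ∫ x, Φ x i ∂P = 0 := by
    intro i
    have := congrFun hI i
    rwa [eval_integral hint] at this
  simp [integral_const_mul, this]

/-- for a properly constrained hypothesis, the dual e-class is the
optimal e-class. -/
theorem statement12 {n m : ℕ} {X : Set (EuclideanSpace ℝ (Fin n))}
    (hXc : IsClosed X) (hXne : X.Nonempty)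
    (H : Set (Measure X)) (hHne : H.Nonempty) (hpc : ProperlyConstrained H)
    (Φ : X → Fin m → ℝ) (hΦ : IsConstraint H Φ) :
    IsOptimalClass H (dualClass Φ) := by
  obtain ⟨k, Ψ, hΨ⟩ := hpc
  have hstar : ∀ x : X, ∃ a : X →₀ ℝ, 0 ≤ a ∧ 0 < a x ∧
      (∑ x ∈ a.support, ENNReal.ofReal (a x) • Measure.dirac x) ∈ H ∧
      Finsupp.linearCombination ℝ Φ a = 0 := by
    intro x
    obtain ⟨a, ha, hax, ha1, hT⟩ := s12_proper hΨ x
    have hm := (s12_mem hΨ.1 a ha ha1).2 hT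
    exact ⟨a, ha, hax, hm, (s12_mem hΦ a ha ha1).1 hm⟩
  have hEV : ∀ E ∈ dualClass Φ, IsEVar H E := by
    rintro _ ⟨l, hl, rfl⟩
    have h0 : ∀ x, 0 ≤ 1 - ∑ i, l i * Φ x i := fun x => by
      have := hl x (Set.mem_univ x); linarith
    refine ⟨?_, h0, fun P hP => ?_⟩
    · have hc : ∀ i, Continuous fun x => Φ x i := fun i => (continuous_apply i).comp hΦ.1
      exact Continuous.measurable (by fun_prop)
    · obtain ⟨hp, hi, h1⟩ := s12_expect hΦ hP l
      rw [← ofReal_integral_eq_lintegral_ofReal hi (Filter.Eventually.of_forall h0), h1]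
      simp
  refine ⟨⟨hEV, ?_⟩, ?_⟩
  · intro E hE
    obtain ⟨l, hl⟩ := s12_dual Φ (fun x => 1 - E x)
      (fun x => by
        obtain ⟨a, h1, h2, -, h3⟩ := hstar x
        exact ⟨a, h1, h2, h3⟩)
      (by
        intro a ha hT
        have hsplit : Finsupp.linearCombination ℝ (fun x => 1 - E x) a =
            Finsupp.linearCombination ℝ (fun _ : X => (1 : ℝ)) a
              - Finsupp.linearCombination ℝ E a := by
          simp only [Finsupp.linearCombination_apply, Finsupp.sum, smul_eq_mul, mul_sub,
            Finset.sum_sub_distrib]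
        rw [hsplit]
        set t := Finsupp.linearCombination ℝ (fun _ : X => (1 : ℝ)) a with ht
        have ht' : t = ∑ x ∈ a.support, a x := by
          simp [ht, Finsupp.linearCombination_apply, Finsupp.sum]
        have ht0 : 0 ≤ t := by
          rw [ht']; exact Finset.sum_nonneg fun x _ => ha x
        rcases ht0.eq_or_lt with h | h
        · have ha0 : a = 0 := by
            rw [ht'] at h
            have := (Finset.sum_eq_zero_iff_of_nonneg (fun x _ => ha x)).1 h.symm
            ext x
            by_cases hx : x ∈ a.support
            · exact this x hx
            · simpa using hx
          rw [← h, ha0]; simp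
        · have hb : 0 ≤ t⁻¹ • a := smul_nonneg (by positivity) ha
          have hm := (s12_mem hΦ (t⁻¹ • a) hb
            (by rw [map_smul, ← ht, smul_eq_mul, inv_mul_cancel₀ h.ne'])).2
            (by rw [map_smul, hT, smul_zero])
          have := hE.2.2 _ hm
          rw [s12_meas _ hb _ hE.2.1, ENNReal.ofReal_le_one, map_smul, smul_eq_mul,
            inv_mul_le_iff₀ h] at this
          linarith)
    refine ⟨_, ⟨l, ?_, rfl⟩, ?_⟩
    · intro x _
      have := hl x
      have := hE.2.1 x
      linarith
    · intro x
      have := hl x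
      show E x ≤ 1 - ∑ i, l i * Φ x i
      linarith
  · intro C' hC' E hE
    obtain ⟨E', hE', hmaj⟩ := hC'.2 E (hEV E hE)
    have : E' = E := by
      obtain ⟨l, hl, rfl⟩ := hE
      funext x
      obtain ⟨a, ha, hax, hm, hT⟩ := hstar x
      have hE'v := hC'.1 E' hE'
      obtain ⟨hp, hi, h1⟩ := s12_expect hΦ hm l
      have h0 : ∀ x, 0 ≤ 1 - ∑ i, l i * Φ x i := fun x => by
        have := hl x (Set.mem_univ x); linarith
      have hA := hE'v.2.2 _ hm
      have hB := ofReal_integral_eq_lintegral_ofReal hi (Filter.Eventually.of_forall h0)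
      rw [s12_meas _ ha _ h0, h1, ENNReal.ofReal_one] at hB
      rw [s12_meas _ ha _ hE'v.2.1, ENNReal.ofReal_le_one] at hA
      have hB' := (ENNReal.ofReal_eq_one.1 hB.symm)
      have hle : ∀ y ∈ a.support, 0 ≤ a y * (E' y - (1 - ∑ i, l i * Φ y i)) := fun y _ =>
        mul_nonneg (ha y) (sub_nonneg.2 (hmaj y))
      have hs : ∑ y ∈ a.support, a y * (E' y - (1 - ∑ i, l i * Φ y i)) ≤ 0 := by
        simp only [Finsupp.linearCombination_apply, Finsupp.sum, smul_eq_mul] at hA hB'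
        simp only [mul_sub (a _) (E' _), Finset.sum_sub_distrib]
        rw [hB']
        linarith
      have hz := (Finset.sum_eq_zero_iff_of_nonneg hle).1
        (le_antisymm hs (Finset.sum_nonneg hle)) x (by simpa using hax.ne')
      rcases mul_eq_zero.1 hz with h | h
      · exact absurd h hax.ne'
      · exact sub_eq_zero.1 h
    rw [← this]; exact hE'
end

section
/- Let X be a finite subset of ℝⁿ of cardinality d ≥ 1, and identify real-valued functions on X and Borel measures on X with vectors in ℝᵈ, so that ⟨P,φ⟩ is the standard dot product. Let H be a properly constrained hypothesis on X and Φ : X → ℝᵐ a constraint for H. Then Span Φ = H^⊥, where Span Φ = {λ·Φ : λ ∈ ℝᵐ} ⊆ ℝᵈ and H^⊥ is the orthogonal complement in ℝᵈ of the linear span of H. -/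
open MeasureTheory Set ENNReal

theorem weights_integral_zero {n m : ℕ} {X : Set (EuclideanSpace ℝ (Fin n))} [Fintype X]
    (H : Set (Measure X)) (Φ : X → Fin m → ℝ) (hΦ : IsConstraint H Φ)
    (w : X → ℝ) (hw : ∀ x, 0 ≤ w x) (hs : 0 < ∑ x, w x)
    (h0 : ∀ i, ∑ x, w x * Φ x i = 0)
    (f : X → ℝ) (hf : ∀ P ∈ H, ∫ x, f x ∂P = 0) : ∑ x, w x * f x = 0 := by
  set s := ∑ x, w x with hsdef
  let P : Measure X := ∑ x, ENNReal.ofReal (w x / s) • Measure.dirac x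
  have hP : IsProbabilityMeasure P := by
    constructor
    simp only [P, Measure.finsetSum_apply, Measure.smul_apply, measure_univ, smul_eq_mul, mul_one]
    rw [← ENNReal.ofReal_sum_of_nonneg (fun x _ => div_nonneg (hw x) hs.le), ← Finset.sum_div,
      ← hsdef, div_self hs.ne', ENNReal.ofReal_one]
  have hint : ∀ g : X → ℝ, ∫ x, g x ∂P = (∑ x, w x * g x) / s := by
    intro g
    have h1 : ∀ x ∈ (Finset.univ : Finset X),
        Integrable g (ENNReal.ofReal (w x / s) • Measure.dirac x) := by
      intro x _
      exact (Integrable.of_finite).smul_measure ENNReal.ofReal_ne_top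
    simp only [P]
    rw [integral_finsetSum_measure h1, Finset.sum_div]
    refine Finset.sum_congr rfl fun x _ => ?_
    rw [integral_smul_measure, integral_dirac,
      ENNReal.toReal_ofReal (div_nonneg (hw x) hs.le), smul_eq_mul]
    ring
  have hPH : P ∈ H := by
    rw [hΦ.2]
    refine ⟨hP, ?_, ?_⟩
    · have : Integrable (fun x => ∑ i, |Φ x i|) P := Integrable.of_finite
      exact this.lintegral_lt_top
    · funext i
      rw [eval_integral (fun i => Integrable.of_finite), hint, h0 i]
      simp
  have h2 := hf P hPH
  rw [hint] at h2
  rcases div_eq_zero_iff.1 h2 with h | h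
  · exact h
  · exact absurd h hs.ne'

theorem constraint_coord {n m : ℕ} {X : Set (EuclideanSpace ℝ (Fin n))} [Finite X]
    (H : Set (Measure X)) (Φ : X → Fin m → ℝ) (hΦ : IsConstraint H Φ) (i : Fin m) :
    ∀ P ∈ H, ∫ x, Φ x i ∂P = 0 := by
  intro P hP
  rw [hΦ.2] at hP
  obtain ⟨h1, -, h3⟩ := hP
  rw [← eval_integral (fun i => Integrable.of_finite), h3]
  rfl

theorem exists_pos_weights {ι : Type*} [Fintype ι] [Nonempty ι] {m : ℕ} (Ψ : ι → Fin m → ℝ)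
    (h : (0 : Fin m → ℝ) ∈ intrinsicInterior ℝ (convexHull ℝ (Set.range Ψ))) :
    ∃ p : ι → ℝ, (∀ x, 0 < p x) ∧ ∑ x, p x • Ψ x = 0 := by
  classical
  set d : ℝ := (Fintype.card ι : ℝ) with hd
  have hdpos : 0 < d := by
    rw [hd]; exact_mod_cast Fintype.card_pos
  have ha : ∑ x, d⁻¹ • Ψ x ∈ convexHull ℝ (Set.range Ψ) := by
    refine mem_convexHull_of_exists_fintype (fun _ => d⁻¹) Ψ (fun _ => by positivity) ?_
      (fun x => mem_range_self x) rfl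
    simp [← hd, hdpos.ne']
  set a := ∑ x, d⁻¹ • Ψ x with hadef
  obtain ⟨y, hy, hy0⟩ := mem_intrinsicInterior.1 h
  have h0S : (0 : Fin m → ℝ) ∈ affineSpan ℝ (convexHull ℝ (Set.range Ψ)) := hy0 ▸ y.2
  have haS := subset_affineSpan ℝ _ ha
  let γ : ℝ → affineSpan ℝ (convexHull ℝ (Set.range Ψ)) :=
    fun t => ⟨AffineMap.lineMap 0 a t, AffineMap.lineMap_mem t h0S haS⟩
  have hγ : Continuous γ := by
    refine Continuous.subtype_mk ?_ _
    exact AffineMap.lineMap_continuous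
  have hγ0 : γ 0 = y := by
    apply Subtype.ext
    simp [γ, hy0]
  have hev := hγ.continuousAt.preimage_mem_nhds (x := 0)
    (by rw [hγ0]; exact mem_interior_iff_mem_nhds.1 hy)
  obtain ⟨ε, hε, hb⟩ := Metric.mem_nhds_iff.1 hev
  have hmem : γ (-(ε/2)) ∈
      ((↑) ⁻¹' (convexHull ℝ (Set.range Ψ)) : Set (affineSpan ℝ (convexHull ℝ (Set.range Ψ)))) := by
    apply hb
    rw [Metric.mem_ball, Real.dist_eq, sub_zero, abs_neg, abs_of_pos (by positivity)]
    linarith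
  have hmem2 : (-(ε/2)) • a ∈ convexHull ℝ (Set.range Ψ) := by
    simpa [γ, AffineMap.lineMap_apply_module] using hmem
  have hsub : convexHull ℝ (Set.range Ψ) ⊆ (Fintype.linearCombination ℝ Ψ) '' stdSimplex ℝ ι := by
    refine convexHull_min ?_ ((convex_stdSimplex ℝ ι).linear_image _)
    rintro _ ⟨x, rfl⟩
    exact ⟨Pi.single x 1, single_mem_stdSimplex ℝ x, by simp⟩
  obtain ⟨w, hw, hwe⟩ := hsub hmem2
  refine ⟨fun x => w x + ε / 2 * d⁻¹, fun x => ?_, ?_⟩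
  · have := hw.1 x
    positivity
  · rw [Fintype.linearCombination_apply] at hwe
    simp only [add_smul, Finset.sum_add_distrib, hwe, mul_smul]
    rw [← Finset.smul_sum, ← hadef]
    simp

/-- for finite `X` (identifying functions and measures on `X` with vectors,
so that `⟨P,f⟩ = ∫ f dP` is the dot product), the span of the components of any
constraint of a properly constrained hypothesis equals the orthogonal complement of `H`,
namely the set of functions whose expectation vanishes under every `P ∈ H`. -/
theorem statement13 {n m : ℕ} {X : Set (EuclideanSpace ℝ (Fin n))}
    (hXf : X.Finite) (hXne : X.Nonempty)
    (H : Set (Measure X)) (hHne : H.Nonempty) (hpc : ProperlyConstrained H)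
    (Φ : X → Fin m → ℝ) (hΦ : IsConstraint H Φ) :
    (Submodule.span ℝ (Set.range fun i : Fin m => fun x : X => Φ x i) : Set (X → ℝ)) =
      {f : X → ℝ | ∀ P ∈ H, ∫ x, f x ∂P = 0} := by
  classical
  have : Finite X := hXf
  have : Fintype X := Fintype.ofFinite X
  have : Nonempty X := hXne.to_subtype
  apply Set.Subset.antisymm
  · intro f hf P hP
    have hPp : IsProbabilityMeasure P := by
      rw [hΦ.2] at hP
      exact hP.1
    have hf' : f ∈ Submodule.span ℝ (Set.range fun i : Fin m => fun x : X => Φ x i) := hf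
    induction hf' using Submodule.span_induction with
    | mem g hg =>
      obtain ⟨i, rfl⟩ := hg
      exact constraint_coord H Φ hΦ i P hP
    | zero => simp
    | add g k hg hk ihg ihk =>
      simp only [Pi.add_apply]
      rw [integral_add Integrable.of_finite Integrable.of_finite, ihg hg, ihk hk, add_zero]
    | smul c g hg ih =>
      simp only [Pi.smul_apply]
      rw [integral_smul, ih hg, smul_zero]
  · intro f hf
    obtain ⟨k, Ψ, hΨ, hint⟩ := hpc
    obtain ⟨p, hp, hpΨ⟩ := exists_pos_weights Ψ hint
    have hpsum : 0 < ∑ x, p x := Finset.sum_pos (fun x _ => hp x) Finset.univ_nonempty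
    have key : ∀ g : X → ℝ, (∀ P ∈ H, ∫ x, g x ∂P = 0) → ∑ x, p x * g x = 0 :=
      weights_integral_zero H Ψ hΨ p (fun x => (hp x).le) hpsum (fun i => by
        simpa using congrFun hpΨ i)
    by_contra hnot
    obtain ⟨L, hLf, hL⟩ := Submodule.exists_le_ker_of_notMem (K := ℝ)
      (p := Submodule.span ℝ (Set.range fun i : Fin m => fun x : X => Φ x i)) hnot
    let q : X → ℝ := fun x => L (Pi.single x 1)
    have hLq : ∀ g : X → ℝ, L g = ∑ x, q x * g x := by
      intro g
      rw [LinearMap.pi_apply_eq_sum_univ L g]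
      refine Finset.sum_congr rfl fun x _ => ?_
      rw [smul_eq_mul, mul_comm]
      congr 2
      ext j
      simp [Pi.single_apply, eq_comm]
    have hev : ∀ᶠ t : ℝ in nhds 0, ∀ x, 0 < p x + t * q x := by
      rw [Filter.eventually_all]
      intro x
      have hc : Continuous fun t : ℝ => p x + t * q x := by fun_prop
      exact hc.continuousAt.eventually_const_lt (by simpa using hp x)
    obtain ⟨ε, hε, hb⟩ := Metric.eventually_nhds_iff.1 hev
    have hpos := hb (y := ε / 2) (by
      rw [Real.dist_eq, sub_zero, abs_of_pos (by positivity)]; linarith)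
    have hsplit : ∀ g : X → ℝ, ∑ x, (p x + ε / 2 * q x) * g x
        = ∑ x, p x * g x + ε / 2 * L g := by
      intro g
      rw [hLq, Finset.mul_sum, ← Finset.sum_add_distrib]
      exact Finset.sum_congr rfl fun x _ => by ring
    have hfin := weights_integral_zero H Φ hΦ (fun x => p x + ε / 2 * q x)
      (fun x => (hpos x).le) (Finset.sum_pos (fun x _ => hpos x) Finset.univ_nonempty)
      (fun i => by
        have h1 : L (fun x => Φ x i) = 0 := hL (Submodule.subset_span ⟨i, rfl⟩)
        rw [hsplit (fun x => Φ x i), key _ (constraint_coord H Φ hΦ i), h1]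
        simp) f hf
    rw [hsplit f, key f hf, zero_add] at hfin
    rcases mul_eq_zero.1 hfin with h | h
    · linarith
    · exact hLf h
end

section
/- Let X be a nonempty finite subset of ℝⁿ, H a properly constrained hypothesis on X, and Φ : X → ℝᵐ a constraint for H. Then the dual e-class E_H^∨ = {x ↦ 1 − λ·Φ(x) : λ ∈ Λ_Φ}, where Λ_Φ = {λ ∈ ℝᵐ : max_{x∈X} λ·Φ(x) ≤ 1}, is the optimal e-class for H. -/
open MeasureTheory Set ENNReal

section aux
variable {n m : ℕ} {X : Set (EuclideanSpace ℝ (Fin n))}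

lemma aux_mem [Fintype X] {H : Set (Measure X)} {Φ : X → Fin m → ℝ} (hΦ : IsConstraint H Φ)
    (q : X → ℝ) (h0 : ∀ x, 0 ≤ q x) (h1 : ∑ x, q x = 1) (h2 : ∑ x, q x • Φ x = 0) :
    ∃ P ∈ H, ∀ x, P.real {x} = q x := by
  classical
  let P : Measure X := ∑ x, ENNReal.ofReal (q x) • Measure.dirac x
  have hP : ∀ x, P {x} = ENNReal.ofReal (q x) := by
    intro x
    simp only [P, Measure.coe_finsetSum, Finset.sum_apply, Measure.smul_apply, smul_eq_mul]
    rw [Finset.sum_eq_single x]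
    · simp
    · intro y _ hy
      simp [hy]
    · simp
  have hPr : ∀ x, P.real {x} = q x := by
    intro x
    rw [Measure.real, hP, ENNReal.toReal_ofReal (h0 x)]
  have hprob : IsProbabilityMeasure P := by
    constructor
    simp only [P, Measure.coe_finsetSum, Finset.sum_apply, Measure.smul_apply, smul_eq_mul]
    simp only [measure_univ, mul_one]
    rw [← ENNReal.ofReal_sum_of_nonneg (fun x _ => h0 x), h1, ENNReal.ofReal_one]
  refine ⟨P, ?_, hPr⟩
  rw [hΦ.2]
  refine ⟨hprob, ?_, ?_⟩
  · unfold MemPPhi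
    exact (Integrable.of_finite (μ := P) (f := fun x => ∑ i, |Φ x i|)).lintegral_lt_top
  · rw [integral_fintype Integrable.of_finite]
    simpa only [hPr] using h2

lemma aux_of_mem [Fintype X] {H : Set (Measure X)} {Φ : X → Fin m → ℝ} (hΦ : IsConstraint H Φ)
    {P : Measure X} (hP : P ∈ H) :
    IsProbabilityMeasure P ∧ (∑ x, P.real {x} = 1) ∧ ∑ x, P.real {x} • Φ x = 0 := by
  rw [hΦ.2] at hP
  obtain ⟨a, b, c⟩ := hP
  refine ⟨a, ?_, ?_⟩
  · have := integral_fintype (μ := P) (f := fun _ => (1:ℝ)) Integrable.of_finite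
    simpa using this.symm
  · rwa [integral_fintype Integrable.of_finite] at c

lemma aux_lint [Fintype X] (P : Measure X) [IsProbabilityMeasure P] (E : X → ℝ)
    (hE : ∀ x, 0 ≤ E x) :
    ∫⁻ x, ENNReal.ofReal (E x) ∂P ≤ 1 ↔ ∑ x, P.real {x} * E x ≤ 1 := by
  rw [← ofReal_integral_eq_lintegral_ofReal Integrable.of_finite (Filter.Eventually.of_forall hE),
    integral_fintype Integrable.of_finite]
  simp

lemma aux_full [Fintype X] [Nonempty X] {H : Set (Measure X)} {Φ : X → Fin m → ℝ}
    (hΦ : IsProperConstraint H Φ) : ∃ P ∈ H, ∀ x, 0 < P.real {x} := by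
  obtain ⟨hc, h0⟩ := hΦ
  set K := convexHull ℝ (Set.range Φ) with hK
  have hN : (0:ℝ) < Fintype.card X := by exact_mod_cast Fintype.card_pos
  set b : Fin m → ℝ := ∑ x, ((Fintype.card X : ℝ)⁻¹) • Φ x with hb
  have hbK : b ∈ K := by
    apply (convex_convexHull ℝ _).sum_mem
    · intros; positivity
    · rw [Finset.sum_const, Finset.card_univ, nsmul_eq_mul]
      exact mul_inv_cancel₀ hN.ne'
    · intro x _; exact subset_convexHull _ _ ⟨x, rfl⟩
  rw [mem_intrinsicInterior] at h0
  obtain ⟨y, hy, hy0⟩ := h0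
  have h0A : (0 : Fin m → ℝ) ∈ affineSpan ℝ K := hy0 ▸ y.2
  have hbA : b ∈ affineSpan ℝ K := subset_affineSpan _ _ hbK
  have hline : ∀ t : ℝ, (-t) • b ∈ affineSpan ℝ K := by
    intro t
    have := AffineMap.lineMap_mem (Q := affineSpan ℝ K) (-t) h0A hbA
    simpa [AffineMap.lineMap_apply] using this
  let f : ℝ → affineSpan ℝ K := fun t => ⟨(-t) • b, hline t⟩
  have hf : Continuous f := by
    apply Continuous.subtype_mk
    fun_prop
  have hf0 : f 0 = y := by
    apply Subtype.ext
    simp [f, hy0]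
  have hev : ∀ᶠ t in nhds (0:ℝ), f t ∈ interior ((↑) ⁻¹' K : Set (affineSpan ℝ K)) := by
    apply hf.continuousAt.eventually_mem
    rw [hf0]
    exact isOpen_interior.mem_nhds hy
  obtain ⟨t, ht, htp⟩ := ((hev.filter_mono nhdsWithin_le_nhds).and
    (self_mem_nhdsWithin : Set.Ioi (0:ℝ) ∈ nhdsWithin 0 (Set.Ioi 0))).exists
  have htp : 0 < t := htp
  have htK : (-t) • b ∈ K := by
    have h := interior_subset ht
    exact h
  have hsub : K ⊆ (fun q : X → ℝ => ∑ x, q x • Φ x) '' (stdSimplex ℝ X) := by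
    classical
    apply convexHull_min
    · rintro _ ⟨x, rfl⟩
      refine ⟨Pi.single x 1, single_mem_stdSimplex ℝ x, ?_⟩
      simp [Pi.single_apply]
    · exact (convex_stdSimplex ℝ X).linear_image (Fintype.linearCombination ℝ Φ)
  obtain ⟨q, ⟨hq0, hq1⟩, hqb⟩ := hsub htK
  have hqb : ∑ x, q x • Φ x = (-t) • b := hqb
  obtain ⟨P, hPH, hP⟩ := aux_mem hc (fun x => (1 + t)⁻¹ * (q x + t * (Fintype.card X : ℝ)⁻¹))
    (fun x => by have := hq0 x; positivity)
    (by
      rw [← Finset.mul_sum, Finset.sum_add_distrib, hq1]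
      simp only [Finset.sum_const, Finset.card_univ, nsmul_eq_mul]
      field_simp)
    (by
      simp only [mul_smul, add_smul, ← Finset.smul_sum, Finset.sum_add_distrib, hqb]
      rw [hb, ← Finset.smul_sum]
      simp)
  refine ⟨P, hPH, fun x => ?_⟩
  rw [hP]
  have := hq0 x
  positivity

lemma aux_sep {ι : Type*} [Fintype ι] (L : Submodule ℝ (ι → ℝ)) (p g : ι → ℝ)
    (hp : ∀ x, 0 < p x) (hpL : ∀ l ∈ L, ∑ x, p x * l x = 0)
    (hg : ∀ q : ι → ℝ, (∀ x, 0 < q x) → (∀ l ∈ L, ∑ x, q x * l x = 0) → 0 ≤ ∑ x, q x * g x) :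
    ∃ l ∈ L, ∀ x, l x ≤ g x := by
  classical
  by_contra! hcon
  set c := ∑ x, p x * g x with hc
  have hc0 : 0 ≤ c := hg p hp hpL
  let A : Set (ι → ℝ) := {a | g - a ∈ L}
  let Y : Set (ι → ℝ) := {r | (∀ x, 0 ≤ r x) ∧ ∑ x, p x * r x = c}
  have hAc : IsClosed A :=
    (Submodule.closed_of_finiteDimensional L).preimage (by fun_prop : Continuous fun a => g - a)
  have hAconv : Convex ℝ A := by
    intro a ha b hb s t hs ht hst
    have : g - (s • a + t • b) = s • (g - a) + t • (g - b) := by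
      have : g = s • g + t • g := by rw [← add_smul, hst, one_smul]
      nth_rewrite 1 [this]
      module
    change _ ∈ L
    rw [this]
    exact L.add_mem (L.smul_mem _ ha) (L.smul_mem _ hb)
  have hYconv : Convex ℝ Y := by
    intro a ha b hb s t hs ht hst
    refine ⟨fun x => ?_, ?_⟩
    · have := ha.1 x
      have := hb.1 x
      simp only [Pi.add_apply, Pi.smul_apply, smul_eq_mul]
      positivity
    · have : ∑ x, p x * (s • a + t • b) x = s * ∑ x, p x * a x + t * ∑ x, p x * b x := by
        rw [Finset.mul_sum, Finset.mul_sum, ← Finset.sum_add_distrib]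
        refine Finset.sum_congr rfl fun x _ => ?_
        simp only [Pi.add_apply, Pi.smul_apply, smul_eq_mul]
        ring
      rw [this, ha.2, hb.2, ← add_mul, hst, one_mul]
  have hYcl : IsClosed Y := by
    apply IsClosed.inter
    · change IsClosed {r : ι → ℝ | ∀ x, 0 ≤ r x}
      simp only [Set.ofPred_forall]
      exact isClosed_iInter fun x => isClosed_le continuous_const (continuous_apply x)
    · exact isClosed_eq (by fun_prop) continuous_const
  have hYcomp : IsCompact Y := by
    refine (isCompact_Icc (a := (0 : ι → ℝ)) (b := fun x => c / p x)).of_isClosed_subset hYcl ?_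
    intro r hr
    refine ⟨hr.1, fun x => ?_⟩
    rw [le_div_iff₀ (hp x), ← hr.2, mul_comm]
    exact Finset.single_le_sum (f := fun x => p x * r x)
      (fun y _ => mul_nonneg (hp y).le (hr.1 y)) (Finset.mem_univ x)
  have hdisj : Disjoint Y A := by
    rw [Set.disjoint_left]
    intro r hr hrA
    obtain ⟨x, hx⟩ := hcon _ hrA
    have := hr.1 x
    simp only [Pi.sub_apply] at hx
    linarith
  obtain ⟨f, u, v, hfY, huv, hfA⟩ :=
    geometric_hahn_banach_compact_closed hYconv hYcomp hAconv hAc hdisj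
  have hfg : v < f g := hfA g (by simp [A])
  have hfL : ∀ l ∈ L, f l = 0 := by
    intro l hl
    by_contra hne
    have h := hfA (g - ((f g - v) / f l) • l) (by
      change g - (g - ((f g - v) / f l) • l) ∈ L
      have he : g - (g - ((f g - v) / f l) • l) = ((f g - v) / f l) • l := by
        ext y
        simp
      rw [he]
      exact L.smul_mem _ hl)
    rw [map_sub, map_smul, smul_eq_mul, div_mul_cancel₀ _ hne] at h
    linarith
  let w : ι → ℝ := fun x => f (Pi.single x 1)
  have hfw : ∀ r, f r = ∑ x, w x * r x := by
    intro r
    conv_lhs => rw [pi_eq_sum_univ' r]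
    rw [map_sum]
    refine Finset.sum_congr rfl fun x _ => ?_
    rw [map_smul, smul_eq_mul, mul_comm]
  have hcomb : ∀ (a b : ℝ) (r : ι → ℝ), ∑ x, (a * p x - b * w x) * r x
      = a * ∑ x, p x * r x - b * f r := by
    intro a b r
    rw [hfw, Finset.mul_sum, Finset.mul_sum, ← Finset.sum_sub_distrib]
    exact Finset.sum_congr rfl fun x _ => by ring
  have hL : ∀ (a b : ℝ), ∀ l ∈ L, ∑ x, (a * p x - b * w x) * l x = 0 := by
    intro a b l hl
    rw [hcomb, hpL l hl, hfL l hl]; simp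
  rcases hc0.eq_or_lt with hc0 | hc0
  · have hu : 0 < u := by
      have := hfY 0 ⟨by simp, by simp [← hc0]⟩
      simpa using this
    have hev : ∀ᶠ e in nhds (0:ℝ), ∀ x, 0 < 1 * p x - e * w x := by
      rw [Filter.eventually_all]
      intro x
      have : Continuous fun e : ℝ => 1 * p x - e * w x := by fun_prop
      exact this.continuousAt.eventually_const_lt (by simpa using hp x)
    obtain ⟨e, he, hep⟩ := ((hev.filter_mono nhdsWithin_le_nhds).and
      (self_mem_nhdsWithin : Set.Ioi (0:ℝ) ∈ nhdsWithin 0 (Set.Ioi 0))).exists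
    have hep : 0 < e := hep
    have := hg _ he (hL 1 e)
    rw [hcomb, ← hc, ← hc0] at this
    nlinarith
  · have := hg (fun x => u * p x - c * w x) (fun x => by
      have h := hfY (Pi.single x (c / p x)) ⟨fun y => by
          rw [Pi.single_apply]
          split_ifs
          · have := hp x
            positivity
          · exact le_rfl, by
          have := (hp x).ne'
          simp [Pi.single_apply]
          field_simp⟩
      rw [hfw] at h
      simp [Pi.single_apply] at h
      have hpx := hp x
      rw [← mul_div_assoc, div_lt_iff₀ hpx] at h
      linarith) (hL u c)
    rw [hcomb, ← hc] at this
    nlinarith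

end aux

/-- for a properly constrained hypothesis on a nonempty finite `X`,
the dual e-class is the optimal e-class. -/
theorem statement14 {n m : ℕ} {X : Set (EuclideanSpace ℝ (Fin n))}
    (hXf : X.Finite) (hXne : X.Nonempty)
    (H : Set (Measure X)) (hHne : H.Nonempty) (hpc : ProperlyConstrained H)
    (Φ : X → Fin m → ℝ) (hΦ : IsConstraint H Φ) :
    IsOptimalClass H (dualClass Φ) := by
  
  classical
  have : Fintype X := hXf.fintype
  have : Nonempty X := hXne.to_subtype
  obtain ⟨m', Ψ, hΨ⟩ := hpc
  obtain ⟨P₀, hP₀, hpos⟩ := aux_full hΨ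
  obtain ⟨hprob₀, hsum₀, hz₀⟩ := aux_of_mem hΦ hP₀
  have hswap : ∀ (q : X → ℝ) (l : Fin m → ℝ), ∑ x, q x * ∑ i, l i * Φ x i
      = ∑ i, l i * (∑ x, q x • Φ x) i := by
    intro q l
    simp only [Finset.sum_apply, Pi.smul_apply, smul_eq_mul, Finset.mul_sum]
    rw [Finset.sum_comm]
    exact Finset.sum_congr rfl fun i _ => Finset.sum_congr rfl fun x _ => by ring
  have hone : ∀ P ∈ H, ∀ l : Fin m → ℝ,
      ∑ x, P.real {x} * (1 - ∑ i, l i * Φ x i) = 1 := by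
    intro P hP l
    obtain ⟨_, h1, h2⟩ := aux_of_mem hΦ hP
    simp only [mul_sub, mul_one, Finset.sum_sub_distrib]
    rw [hswap (fun x => P.real {x}) l, h1, h2]
    simp
  refine ⟨⟨?_, ?_⟩, ?_⟩
  · rintro _ ⟨l, hl, rfl⟩
    have hnn : ∀ x, 0 ≤ 1 - ∑ i, l i * Φ x i := fun x => sub_nonneg.2 (hl x (Set.mem_univ x))
    refine ⟨measurable_of_finite _, hnn, fun P hP => ?_⟩
    have := (aux_of_mem hΦ hP).1
    exact (aux_lint P _ hnn).2 (hone P hP l).le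
  · rintro E ⟨-, hE0, hE⟩
    let T : (Fin m → ℝ) →ₗ[ℝ] (X → ℝ) :=
      { toFun := fun l x => ∑ i, l i * Φ x i
        map_add' := by
          intro a b; ext x
          simp [add_mul, Finset.sum_add_distrib]
        map_smul' := by
          intro a b; ext x
          simp [mul_assoc, Finset.mul_sum] }
    obtain ⟨_, ⟨l, rfl⟩, hl⟩ := aux_sep (LinearMap.range T) (fun x => P₀.real {x})
      (fun x => 1 - E x) hpos
      (by
        rintro _ ⟨l, rfl⟩
        change ∑ x, P₀.real {x} * ∑ i, l i * Φ x i = 0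
        rw [hswap (fun x => P₀.real {x}) l, hz₀]
        simp)
      (by
        intro q hq hqL
        have hS : 0 < ∑ x, q x := Finset.sum_pos (fun x _ => hq x) Finset.univ_nonempty
        set S := ∑ x, q x with hSdef
        have hqΦ : ∑ x, q x • Φ x = 0 := by
          ext i
          have h := hqL _ ⟨Pi.single i 1, rfl⟩
          change ∑ x, q x * ∑ j, (Pi.single i 1 : Fin m → ℝ) j * Φ x j = 0 at h
          rw [hswap] at h
          simpa [Pi.single_apply] using h
        obtain ⟨P, hP, hPq⟩ := aux_mem hΦ (fun x => S⁻¹ * q x)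
          (fun x => by have := hq x; positivity)
          (by rw [← Finset.mul_sum, ← hSdef]; field_simp)
          (by simp only [mul_smul, ← Finset.smul_sum, hqΦ, smul_zero])
        have := (aux_of_mem hΦ hP).1
        have h := (aux_lint P E hE0).1 (hE P hP)
        simp only [hPq, mul_assoc] at h
        rw [← Finset.mul_sum, inv_mul_le_iff₀ hS, mul_one] at h
        simp only [mul_sub, mul_one, Finset.sum_sub_distrib]
        linarith)
    have hl : ∀ x, ∑ i, l i * Φ x i ≤ 1 - E x := hl
    refine ⟨_, ⟨l, fun x _ => ?_, rfl⟩, fun x => ?_⟩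
    · have := hl x
      have := hE0 x
      linarith
    · have := hl x
      change E x ≤ 1 - ∑ i, l i * Φ x i
      linarith
  · rintro C ⟨hC1, hC2⟩ _ ⟨l, hl, rfl⟩
    have hnn : ∀ x, 0 ≤ 1 - ∑ i, l i * Φ x i := fun x => sub_nonneg.2 (hl x (Set.mem_univ x))
    obtain ⟨E', hE'C, hmaj⟩ := hC2 (fun x => 1 - ∑ i, l i * Φ x i)
      ⟨measurable_of_finite _, hnn, fun P hP => by
        have := (aux_of_mem hΦ hP).1
        exact (aux_lint P _ hnn).2 (hone P hP l).le⟩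
    obtain ⟨-, hE0, hE⟩ := hC1 E' hE'C
    have h1 := (aux_lint P₀ E' hE0).1 (hE P₀ hP₀)
    have h2 := hone P₀ hP₀ l
    have hle : ∀ x ∈ Finset.univ, P₀.real {x} * (1 - ∑ i, l i * Φ x i) ≤ P₀.real {x} * E' x :=
      fun x _ => mul_le_mul_of_nonneg_left (hmaj x) (hpos x).le
    have heq := (Finset.sum_eq_sum_iff_of_le hle).1
      (le_antisymm (Finset.sum_le_sum hle) (h1.trans h2.ge))
    have : (fun x => 1 - ∑ i, l i * Φ x i) = E' := by
      ext x
      exact mul_left_cancel₀ (hpos x).ne' (heq x (Finset.mem_univ x))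
    rw [this]
    exact hE'C
end
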